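/- arXiv:1708.08118 — 6 statements merged into one kernel-verified Lean document; each statement's English description precedes it below -/
import Mathlib

section
/- Let T be a finite semigroup, let T̃ denote the monoid obtained from T by first adjoining a new identity and then adjoining a new zero, and let M be any monoid with |M| > |T|. Then T^♭ embeds into the wreath product M ≀ T̃; that is, there exists an injective semigroup homomorphism from T^♭ into M ≀ T̃. -/
/-- Self-maps of `α` under the composition product `(f * g) x = f (g x)`. -/
structure CompFun (α : Type) where
  toFun : α → α

instance {α : Type} : Semigroup (CompFun α) where
  mul f g := ⟨fun x => f.toFun (g.toFun x)⟩
  mul_assoc _ _ _ := rfl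

instance {α : Type} [Finite α] : Finite (CompFun α) :=
  Finite.of_surjective (fun f : α → α => CompFun.mk f) fun f => ⟨f.toFun, rfl⟩

/-- Self-maps of `α` under the opposite composition product `(f * g) x = g (f x)`. -/
structure OpCompFun (α : Type) where
  toFun : α → α

instance {α : Type} : Semigroup (OpCompFun α) where
  mul f g := ⟨fun x => g.toFun (f.toFun x)⟩
  mul_assoc _ _ _ := rfl

instance {α : Type} [Finite α] : Finite (OpCompFun α) :=
  Finite.of_surjective (fun f : α → α => OpCompFun.mk f) fun f => ⟨f.toFun, rfl⟩

/-- `T^♭`: the subsemigroup of self-maps of `T^I = WithOne T` (under the product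
`(f * g) x = f (g x)`) consisting of the left translations by elements of `T`
and the constant maps. -/
def Flat (T : Type) [Semigroup T] : Subsemigroup (CompFun (WithOne T)) where
  carrier := {f | (∃ t : T, f.toFun = fun x => ↑t * x) ∨ ∃ cst : WithOne T, f.toFun = fun _ => cst}
  mul_mem' := by
    rintro f g (⟨t, ht⟩ | ⟨cf, hf⟩) (⟨t', ht'⟩ | ⟨cg, hg⟩)
    · refine Or.inl ⟨t * t', funext fun x => ?_⟩
      show f.toFun (g.toFun x) = _
      rw [ht, ht']
      simp [mul_assoc]
    · refine Or.inr ⟨↑t * cg, funext fun x => ?_⟩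
      show f.toFun (g.toFun x) = _
      rw [ht, hg]
    · refine Or.inr ⟨cf, funext fun x => ?_⟩
      show f.toFun (g.toFun x) = _
      rw [hf]
    · refine Or.inr ⟨cf, funext fun x => ?_⟩
      show f.toFun (g.toFun x) = _
      rw [hf]

/-- `T^♯`: the subsemigroup of self-maps of `T^I = WithOne T` (under the product
`(f * g) x = g (f x)`) consisting of the right translations by elements of `T`
and the constant maps. -/
def Sharp (T : Type) [Semigroup T] : Subsemigroup (OpCompFun (WithOne T)) where
  carrier := {f | (∃ t : T, f.toFun = fun x => x * ↑t) ∨ ∃ cst : WithOne T, f.toFun = fun _ => cst}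
  mul_mem' := by
    rintro f g (⟨t, ht⟩ | ⟨cf, hf⟩) (⟨t', ht'⟩ | ⟨cg, hg⟩)
    · refine Or.inl ⟨t * t', funext fun x => ?_⟩
      show g.toFun (f.toFun x) = _
      rw [ht, ht']
      simp [mul_assoc]
    · refine Or.inr ⟨cg, funext fun x => ?_⟩
      show g.toFun (f.toFun x) = _
      rw [hg]
    · refine Or.inr ⟨cf * ↑t', funext fun x => ?_⟩
      show g.toFun (f.toFun x) = _
      rw [ht', hf]
    · refine Or.inr ⟨cg, funext fun x => ?_⟩
      show g.toFun (f.toFun x) = _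
      rw [hg]

instance (T : Type) [Finite T] : Finite (WithOne T) := by
  have := Fintype.ofFinite T
  exact Finite.of_fintype (Option T)

/-!
The embedding sends `λ_t` to `(1, t)` and `c^♭` to `(x ↦ h (x c), c k)`, where `k` is a left zero of
`T^I` if there is one, and `k = 0` otherwise.  As `k s = k` for all `s` in `T^I`, products with a
constant on the left come out right as soon as `h` is trivial on `T̃ k`.  The maps that are both
constant and translations are the `λ_t = t^♭` with `t` a left zero, and for them the two recipes
agree because `t k = t`.  Injectivity requires that `s` in `T^I` be determined by `(h s, s k)`:
elements with `s k = s` are determined by `s k`, so they may share the value `h s = 1`, and since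
`|T^I| ≤ |M|` the remaining elements can be given distinct values, different from `1` if there are
elements with `s k = s`.
-/

/-- The wreath product `M ≀ N`: the set `(N → M) × N`, made a structure so that it carries the
twisted multiplication and not the componentwise one. -/
@[ext]
structure WreathProduct (M N : Type*) where
  left : N → M
  right : N

namespace WreathProduct

variable {M N : Type*}

instance [Mul M] [Mul N] : Mul (WreathProduct M N) where
  mul a b := ⟨fun x => a.left x * b.left (x * a.right), a.right * b.right⟩

theorem mul_def [Mul M] [Mul N] (a b : WreathProduct M N) :
    a * b = ⟨fun x => a.left x * b.left (x * a.right), a.right * b.right⟩ :=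
  rfl

instance [Monoid M] [Monoid N] : Monoid (WreathProduct M N) where
  one := ⟨1, 1⟩
  mul_assoc a b c := by simp only [mul_def, mul_assoc]
  one_mul a := WreathProduct.ext
    (funext fun x => (one_mul _).trans (congrArg a.left (mul_one x)))
    (one_mul a.right)
  mul_one a := WreathProduct.ext (funext fun x => mul_one (a.left x)) (mul_one a.right)

end WreathProduct

namespace Flat

variable {T : Type} [Semigroup T]

/-- The left translation `λ_t` as an element of `T^♭`. -/
def leftMul (t : T) : Flat T := ⟨⟨fun x => t * x⟩, .inl ⟨t, rfl⟩⟩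

/-- The constant map `c^♭` as an element of `T^♭`. -/
def const (c : WithOne T) : Flat T := ⟨⟨fun _ => c⟩, .inr ⟨c, rfl⟩⟩

theorem eq_leftMul_or_eq_const : ∀ a : Flat T, (∃ t, a = leftMul t) ∨ ∃ c, a = const c
  | ⟨⟨_⟩, .inl ⟨t, h⟩⟩ => .inl ⟨t, Subtype.ext (congrArg CompFun.mk h)⟩
  | ⟨⟨_⟩, .inr ⟨c, h⟩⟩ => .inr ⟨c, Subtype.ext (congrArg CompFun.mk h)⟩

theorem leftMul_mul_leftMul (s t : T) : leftMul s * leftMul t = leftMul (s * t) :=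
  Subtype.ext <| congrArg CompFun.mk <| funext fun x => (mul_assoc (s : WithOne T) t x).symm

theorem leftMul_mul_const (t : T) (c : WithOne T) :
    leftMul t * const c = const ((t : WithOne T) * c) :=
  rfl

theorem const_mul (c : WithOne T) (a : Flat T) : const c * a = const c :=
  rfl

theorem leftMul_eq_const_iff {t : T} {c : WithOne T} :
    leftMul t = const c ↔ ∀ x : WithOne T, (t : WithOne T) * x = c := by
  rw [Subtype.ext_iff, leftMul, const, CompFun.mk.injEq, funext_iff]

end Flat

/-- The data `(k, h)` from which an embedding of `T^♭` into `M ≀ T̃` is built, with `S` in the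
role of `T^I` and `WithZero S` in the role of `T̃`. -/
structure IsFlatCoding {S M : Type*} [Mul S] [One M] (k : WithZero S) (h : WithZero S → M) :
    Prop where
  absorb : ∀ s : S, k * s = k
  leftZero_mul : ∀ s : S, (∀ x, s * x = s) → s * k = s
  map_eq_one : ∀ x, x * k = x → h x = 1
  eq_of_eq : ∀ s t : S, h s = h t → (s * k : WithZero S) = t * k → s = t

theorem exists_absorbing_fixing_leftZeros (S : Type*) [Mul S] :
    ∃ k : WithZero S, (∀ s : S, k * s = k) ∧ ∀ s : S, (∀ x, s * x = s) → s * k = s := by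
  by_cases hS : ∃ l : S, ∀ x, l * x = l
  · obtain ⟨l, hl⟩ := hS
    exact ⟨l, fun s => by rw [← WithZero.coe_mul, hl],
      fun s hs => by rw [← WithZero.coe_mul, hs]⟩
  · exact ⟨0, fun s => zero_mul _, fun s hs => (hS ⟨s, hs⟩).elim⟩

theorem exists_const_on_injective_off {α β : Type*} (e : α ↪ β) (p : Set α) (b : β) :
    ∃ h : α → β, (∀ x ∈ p, h x = b) ∧ ∀ x y, h x = h y → x = y ∨ x ∈ p ∧ y ∈ p := by
  classical
  obtain rfl | ⟨l, hl⟩ := p.eq_empty_or_nonempty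
  · exact ⟨e, fun _ hx => hx.elim, fun _ _ hxy => .inl (e.injective hxy)⟩
  let g : α ↪ β := e.trans (Equiv.swap (e l) b).toEmbedding
  have hgl : g l = b := Equiv.swap_apply_left _ _
  refine ⟨fun x => g (if x ∈ p then l else x), fun x hx => by simp only [if_pos hx, hgl],
    fun x y hxy => ?_⟩
  have h_ite : (if x ∈ p then l else x) = if y ∈ p then l else y := g.injective hxy
  grind

theorem exists_isFlatCoding {S M : Type*} [Mul S] [One M] (e : S ↪ M) :
    ∃ (k : WithZero S) (h : WithZero S → M), IsFlatCoding k h := by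
  obtain ⟨k, absorb, leftZero_mul⟩ := exists_absorbing_fixing_leftZeros S
  obtain ⟨h, h_fixed, h_inj⟩ :=
    exists_const_on_injective_off e {s : S | (s * k : WithZero S) = s} 1
  refine ⟨k, WithZero.recZeroCoe 1 h, absorb, leftZero_mul, fun x hx => ?_, fun s t hst hk => ?_⟩
  · induction x using WithZero.recZeroCoe with
    | zero => rfl
    | coe s => exact h_fixed s hx
  · obtain rfl | ⟨hs, ht⟩ := h_inj s t hst
    · rfl
    · exact WithZero.coe_injective (hs.symm.trans (hk.trans ht))

namespace IsFlatCoding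

theorem mul_self {S M : Type*} [Mul S] [One M] {k : WithZero S} {h : WithZero S → M}
    (hc : IsFlatCoding k h) : k * k = k := by
  cases k with
  | zero => exact zero_mul _
  | coe l => exact hc.absorb l

theorem map_mul_eq_one {S M : Type*} [Semigroup S] [One M] {k : WithZero S} {h : WithZero S → M}
    (hc : IsFlatCoding k h) (x : WithZero S) : h (x * k) = 1 :=
  hc.map_eq_one _ (by rw [mul_assoc, hc.mul_self])

end IsFlatCoding

namespace Flat

variable {T : Type} [Semigroup T] {M : Type*}

open Classical in
/-- The map `T^♭ → M ≀ T̃` given by `c^♭ ↦ (x ↦ h (x c), c k)` and `λ_t ↦ (1, t)`.  The element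
`c` or `t` is recovered as the value at `1`, and a map that is both constant and a translation is
treated as constant. -/
noncomputable def toWreath [One M] (k : WithZero (WithOne T)) (h : WithZero (WithOne T) → M)
    (a : Flat T) : WreathProduct M (WithZero (WithOne T)) :=
  let c := a.1.toFun 1
  if a = const c then ⟨fun x => h (x * WithZero.coe c), WithZero.coe c * k⟩
  else ⟨fun _ => 1, WithZero.coe c⟩

theorem toWreath_const [One M] (k : WithZero (WithOne T)) (h : WithZero (WithOne T) → M)
    (c : WithOne T) :
    toWreath k h (const c) = ⟨fun x => h (x * WithZero.coe c), WithZero.coe c * k⟩ :=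
  if_pos rfl

section Coding

variable {k : WithZero (WithOne T)} {h : WithZero (WithOne T) → M}

theorem toWreath_leftMul [One M] (hc : IsFlatCoding k h) (t : T) :
    toWreath k h (leftMul t) = ⟨fun _ => 1, WithZero.coe (t : WithOne T)⟩ := by
  by_cases ht : ∀ x : WithOne T, (t : WithOne T) * x = t
  · have htk := hc.leftZero_mul t ht
    rw [leftMul_eq_const_iff.mpr ht, toWreath_const, htk]
    exact WreathProduct.ext (funext fun x => hc.map_eq_one _ (by rw [mul_assoc, htk])) rfl
  · have h_one : (leftMul t).1.toFun 1 = t := mul_one (t : WithOne T)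
    have h_ne : leftMul t ≠ const t := mt leftMul_eq_const_iff.mp ht
    rw [← h_one] at h_ne
    exact (if_neg h_ne).trans (by rw [h_one])

theorem toWreath_mul [Monoid M] (hc : IsFlatCoding k h) (a b : Flat T) :
    toWreath k h (a * b) = toWreath k h a * toWreath k h b := by
  obtain ⟨s, rfl⟩ | ⟨c, rfl⟩ := eq_leftMul_or_eq_const a <;>
    obtain ⟨t, rfl⟩ | ⟨d, rfl⟩ := eq_leftMul_or_eq_const b
  · simp only [leftMul_mul_leftMul, toWreath_leftMul hc, WreathProduct.mul_def,
      mul_one, WithOne.coe_mul, WithZero.coe_mul]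
  · simp only [leftMul_mul_const, toWreath_leftMul hc, toWreath_const, WreathProduct.mul_def,
      one_mul, mul_assoc, WithZero.coe_mul]
  · simp only [const_mul, toWreath_leftMul hc, toWreath_const, WreathProduct.mul_def,
      mul_one, mul_assoc, hc.absorb]
  · have h_left (x : WithZero (WithOne T)) :
        h (x * (WithZero.coe c * k) * WithZero.coe d) = 1 := by
      rw [← mul_assoc, mul_assoc _ k, hc.absorb, hc.map_mul_eq_one]
    have h_right : WithZero.coe c * k * (WithZero.coe d * k) = WithZero.coe c * k := by
      rw [mul_assoc, ← mul_assoc k, hc.absorb, hc.mul_self]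
    simp only [const_mul, toWreath_const, WreathProduct.mul_def, h_left, mul_one, h_right]

theorem const_eq_of_toWreath_eq [One M] (hc : IsFlatCoding k h) {c d : WithOne T}
    (hcd : toWreath k h (const c) = toWreath k h (const d)) : const c = const d := by
  rw [toWreath_const, toWreath_const, WreathProduct.mk.injEq] at hcd
  have h_eq : h (WithZero.coe c) = h (WithZero.coe d) := by
    simpa only [one_mul] using congrFun hcd.1 1
  rw [hc.eq_of_eq c d h_eq hcd.2]

theorem leftMul_eq_const_of_toWreath_eq [One M] (hc : IsFlatCoding k h) {t : T} {c : WithOne T}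
    (htc : toWreath k h (leftMul t) = toWreath k h (const c)) : leftMul t = const c := by
  have htk : WithZero.coe (t : WithOne T) * k = WithZero.coe (t : WithOne T) := by
    have h_right : WithZero.coe (t : WithOne T) = WithZero.coe c * k := by
      simpa only [toWreath_leftMul hc, toWreath_const] using congrArg WreathProduct.right htc
    rw [h_right, mul_assoc, hc.mul_self]
  have ht : leftMul t = const t := leftMul_eq_const_iff.mpr fun x =>
    WithZero.coe_injective <| by rw [WithZero.coe_mul, ← htk, mul_assoc, hc.absorb]
  rw [ht] at htc ⊢
  exact const_eq_of_toWreath_eq hc htc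

theorem toWreath_injective [One M] (hc : IsFlatCoding k h) :
    Function.Injective (toWreath k h) := by
  intro a b hab
  obtain ⟨s, rfl⟩ | ⟨c, rfl⟩ := eq_leftMul_or_eq_const a <;>
    obtain ⟨t, rfl⟩ | ⟨d, rfl⟩ := eq_leftMul_or_eq_const b
  · rw [toWreath_leftMul hc, toWreath_leftMul hc] at hab
    rw [WithOne.coe_injective (WithZero.coe_injective (congrArg WreathProduct.right hab))]
  · exact leftMul_eq_const_of_toWreath_eq hc hab
  · exact (leftMul_eq_const_of_toWreath_eq hc hab.symm).symm
  · exact const_eq_of_toWreath_eq hc hab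

end Coding

end Flat

theorem flat_embeds_wreath_general (T : Type) [Semigroup T] (M : Type*) [Monoid M]
    (e : WithOne T ↪ M) :
    ∃ f : Flat T →ₙ* WreathProduct M (WithZero (WithOne T)), Function.Injective f := by
  obtain ⟨k, h, hc⟩ := exists_isFlatCoding e
  exact ⟨⟨Flat.toWreath k h, Flat.toWreath_mul hc⟩, Flat.toWreath_injective hc⟩

/-- Let `T` be a finite semigroup, let `T̃ = WithZero (WithOne T)` be the
monoid obtained from `T` by adjoining a new identity and then a new zero, and let `M` be any
monoid with `|M| > |T|`.  Then `T^♭` embeds in the wreath product `M ≀ T̃`, i.e. there is an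
injective map `f` from `T^♭` to `(T̃ → M) × T̃` which is a homomorphism for the wreath-product
multiplication `(f, n)(f', n') = (x ↦ f x * f' (x n), n n')`. -/
theorem flat_embeds_wreath
    (T : Type) [Semigroup T] [Finite T] (M : Type) [Monoid M]
    (hcard : Cardinal.mk T < Cardinal.mk M) :
    ∃ f : ↥(Flat T) → (WithZero (WithOne T) → M) × WithZero (WithOne T),
      Function.Injective f ∧
      ∀ a b : ↥(Flat T), f (a * b) =
        ((fun x => (f a).1 x * (f b).1 (x * (f a).2)), (f a).2 * (f b).2) := by
  obtain ⟨e⟩ : Cardinal.mk (WithOne T) ≤ Cardinal.mk M :=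
    Cardinal.mk_option.trans_le (Cardinal.add_one_le_of_lt hcard)
  obtain ⟨f, hf⟩ := flat_embeds_wreath_general T M e
  exact ⟨fun a => ((f a).left, (f a).right),
    fun a b hab => hf (WreathProduct.ext_iff.mpr (Prod.mk.inj hab)),
    fun a b => congrArg (fun w => (w.left, w.right)) (map_mul f a b)⟩
end

section
/- With the notation of the merge construction below, the map f : T_M → T₂^I × T₀^I × T₁^I defined by f(r, s, l) := (r(I₂), s(I₁, I₂), l(I₁)) satisfies f ∘ ψ_M = τ. In particular, there exists a function f : T_M → T₂^I × T₀^I × T₁^I with f ∘ ψ_M = τ. -/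
/-- The data of a triple product `(S_R, S, S_L)`: a left action of `S_L` and a right
action of `S_R` on `S` satisfying the triple-product axioms. -/
structure TripleData (SR S SL : Type) [Semigroup SR] [Semigroup S] [Semigroup SL] where
  lact : SL → S → S
  ract : S → SR → S
  lact_mul : ∀ l s s', lact l (s * s') = lact l s * lact l s'
  mul_ract : ∀ s s' r, ract (s * s') r = ract s r * ract s' r
  mul_lact : ∀ l l' s, lact (l * l') s = lact l (lact l' s)
  ract_mul : ∀ s r r', ract s (r * r') = ract (ract s r) r'
  lact_ract : ∀ l s r, ract (lact l s) r = lact l (ract s r)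

/-- The underlying set of the triple product `(S_R, S, S_L)`. -/
structure Triple {SR S SL : Type} [Semigroup SR] [Semigroup S] [Semigroup SL]
    (d : TripleData SR S SL) where
  fst : SR
  snd : S
  trd : SL

instance {SR S SL : Type} [Semigroup SR] [Semigroup S] [Semigroup SL]
    (d : TripleData SR S SL) : Mul (Triple d) :=
  ⟨fun a b => ⟨a.fst * b.fst, d.ract a.snd b.fst * d.lact a.trd b.snd, a.trd * b.trd⟩⟩

theorem Triple.mul_def {SR S SL : Type} [Semigroup SR] [Semigroup S] [Semigroup SL]
    {d : TripleData SR S SL} (a b : Triple d) :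
    a * b = ⟨a.fst * b.fst, d.ract a.snd b.fst * d.lact a.trd b.snd, a.trd * b.trd⟩ := rfl

/-- The triple product is a semigroup. -/
instance {SR S SL : Type} [Semigroup SR] [Semigroup S] [Semigroup SL]
    (d : TripleData SR S SL) : Semigroup (Triple d) where
  mul_assoc a b c := by
    simp only [Triple.mul_def, Triple.mk.injEq]
    refine ⟨mul_assoc _ _ _, ?_, mul_assoc _ _ _⟩
    simp only [d.mul_ract, d.mul_lact, d.ract_mul, d.lact_mul, d.lact_ract, mul_assoc]

instance {SR S SL : Type} [Semigroup SR] [Semigroup S] [Semigroup SL]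
    [Finite SR] [Finite S] [Finite SL] (d : TripleData SR S SL) : Finite (Triple d) :=
  Finite.of_surjective (fun p : SR × S × SL => Triple.mk p.1 p.2.1 p.2.2)
    fun t => ⟨(t.fst, t.snd, t.trd), rfl⟩
/-- The triple-product data of the merge semigroup: the semigroup of all functions
`T₁^I × T₂^I → T₀^I` under pointwise product, with the left action of `T₁^♯` given by
`(l · s) (t₁, t₂) = s (l t₁, t₂)` and the right action of `T₂^♭` given by
`(s · r) (t₁, t₂) = s (t₁, r t₂)`. -/
def mergeData (T₀ T₁ T₂ : Type) [Semigroup T₀] [Semigroup T₁] [Semigroup T₂] :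
    TripleData (↥(Flat T₂)) ((WithOne T₁ × WithOne T₂) → WithOne T₀) (↥(Sharp T₁)) where
  lact l s := fun p => s ((l : OpCompFun (WithOne T₁)).toFun p.1, p.2)
  ract s r := fun p => s (p.1, (r : CompFun (WithOne T₂)).toFun p.2)
  lact_mul _ _ _ := rfl
  mul_ract _ _ _ := rfl
  mul_lact _ _ _ := rfl
  ract_mul _ _ _ := rfl
  lact_ract _ _ _ := rfl

/-- The image of the nonempty word `a :: l` under the unique semigroup homomorphism
`A⁺ → T` extending the generator map `g : A → T`. -/
def sgProd {α T : Type} [Semigroup T] (g : α → T) (a : α) (l : List α) : T :=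
  l.foldl (fun t x => t * g x) (g a)

/-- The image of a (possibly empty) word under the unique monoid homomorphism
`A^* → T^I` extending the generator map `g : A → T` (the empty word goes to `I`). -/
def wordProd {α T : Type} [Semigroup T] (g : α → T) (l : List α) : WithOne T :=
  (l.map fun x => ((g x : T) : WithOne T)).prod

/-- The word in `(A₁ ∪ A₂)^*` represented by a block: a nonempty `A₁`-word followed by a
nonempty `A₂`-word.  A block is encoded as a pair of (head, tail) pairs, ensuring
nonemptiness of both halves. -/
def blockWord {A₁ A₂ : Type} (b : A₁ × List A₁ × A₂ × List A₂) : List (A₁ ⊕ A₂) :=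
  (b.1 :: b.2.1).map Sum.inl ++ (b.2.2.1 :: b.2.2.2).map Sum.inr

/-- The letter of `(T₁ × T₂)⁺` associated to a block under `μ`, namely
`(ψ₁ w₁, ψ₂ w₂)`. -/
def blockVal {A₁ A₂ T₁ T₂ : Type} [Semigroup T₁] [Semigroup T₂]
    (g₁ : A₁ → T₁) (g₂ : A₂ → T₂) (b : A₁ × List A₁ × A₂ × List A₂) : T₁ × T₂ :=
  (sgProd g₁ b.1 b.2.1, sgProd g₂ b.2.2.1 b.2.2.2)

/-- Partial lift of `c : T₁ × T₂ → T₀` to the adjoined identities, returning `I₀`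
whenever an argument equals the adjoined identity. -/
def clift {T₀ T₁ T₂ : Type} (c : T₁ × T₂ → T₀) (x : WithOne T₁) (y : WithOne T₂) :
    WithOne T₀ :=
  WithOne.recOneCoe 1
    (fun b => WithOne.recOneCoe 1 (fun a => ((c (a, b) : T₀) : WithOne T₀)) x) y

/-- The element `s_{a₁}` of `S = (T₁^I × T₂^I) → T₀^I` associated to a letter `a₁ ∈ A₁`:
`s_{a₁} (t₁, I₂) = I₀` and `s_{a₁} (t₁, t₂) = χ (t₁ ψ₁(a₁), t₂)` for `t₂ ∈ T₂`. -/
def sLetter {A₁ T₀ T₁ T₂ : Type} [Semigroup T₀] [Semigroup T₁] [Semigroup T₂]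
    (g₁ : A₁ → T₁) (c : T₁ × T₂ → T₀) (a : A₁) :
    (WithOne T₁ × WithOne T₂) → WithOne T₀ :=
  fun p => clift c (p.1 * ↑(g₁ a)) p.2

/-- The generator map of the merge homomorphism `ψ_M : A⁺ → T_M`:
`a₁ ↦ (I₂^♭, s_{a₁}, ρ_{ψ₁(a₁)})` for `a₁ ∈ A₁` and `a₂ ↦ (λ_{ψ₂(a₂)}, i₀, I₁^♯)`
for `a₂ ∈ A₂`. -/
def mergeGen {A₁ A₂ T₀ T₁ T₂ : Type} [Semigroup T₀] [Semigroup T₁] [Semigroup T₂]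
    (g₁ : A₁ → T₁) (g₂ : A₂ → T₂) (c : T₁ × T₂ → T₀) :
    A₁ ⊕ A₂ → Triple (mergeData T₀ T₁ T₂)
  | Sum.inl a =>
      ⟨⟨⟨fun _ => 1⟩, Or.inr ⟨1, rfl⟩⟩, sLetter g₁ c a,
        ⟨⟨fun x => x * ↑(g₁ a)⟩, Or.inl ⟨g₁ a, rfl⟩⟩⟩
  | Sum.inr b =>
      ⟨⟨⟨fun x => ↑(g₂ b) * x⟩, Or.inl ⟨g₂ b, rfl⟩⟩, fun _ => 1,
        ⟨⟨fun _ => 1⟩, Or.inr ⟨1, rfl⟩⟩⟩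

/-!
The merge semigroup acts on states which describe the part `w` of a word read so far, from right to
left, as a function of the value `t ∈ T₁^I` of the `A₁`-word in front of it.  The map `f` is the
action on the state of the empty word, evaluated at `t = I₁`, so `f (ψ_M w)` is computed letter by
letter.  In the `A₁`-half of a block only the last letter is followed by an `A₂`-word, and the `t`
it receives, multiplied by its own value, is the value of the whole half; hence each block
contributes exactly one factor, `χ (ψ₁ w₁, ψ₂ w₂)`.
-/

section WordAction

variable {α T X : Type*} [SMul T X]

/-- The action of the word `w ∈ A^*` on a set acted on by `T`, for the generator map `g : A → T`. -/
def wordSMul (g : α → T) (w : List α) (x : X) : X :=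
  w.foldr (fun a y => g a • y) x

theorem wordSMul_cons (g : α → T) (a : α) (w : List α) (x : X) :
    wordSMul g (a :: w) x = g a • wordSMul g w x := rfl

theorem wordSMul_append (g : α → T) (v w : List α) (x : X) :
    wordSMul g (v ++ w) x = wordSMul g v (wordSMul g w x) :=
  List.foldr_append

end WordAction

section WordProducts

variable {α T : Type} [Semigroup T]

theorem wordProd_cons (g : α → T) (a : α) (l : List α) :
    wordProd g (a :: l) = ↑(g a) * wordProd g l := by
  simp only [wordProd, List.map_cons, List.prod_cons]

theorem wordProd_cons_eq_coe_sgProd (g : α → T) (a : α) (l : List α) :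
    wordProd g (a :: l) = ↑(sgProd g a l) := by
  induction l using List.reverseRecOn with
  | nil => simp [wordProd, sgProd]
  | append_singleton l b ih => simp_all [wordProd, sgProd, ← mul_assoc]

theorem sgProd_smul {X : Type*} [SemigroupAction T X] (g : α → T) (a : α) (l : List α) (x : X) :
    sgProd g a l • x = wordSMul g (a :: l) x := by
  induction l using List.reverseRecOn generalizing x with
  | nil => rfl
  | append_singleton l b ih =>
    calc sgProd g a (l ++ [b]) • x
        = (sgProd g a l * g b) • x := by simp only [sgProd, List.foldl_append, List.foldl]
      _ = wordSMul g (a :: l) (g b • x) := by rw [mul_smul, ih]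
      _ = wordSMul g (a :: (l ++ [b])) x := (wordSMul_append g (a :: l) [b] x).symm

end WordProducts

theorem clift_one_right {T₀ T₁ T₂ : Type} (c : T₁ × T₂ → T₀) (t₁ : WithOne T₁) :
    clift c t₁ 1 = 1 := rfl

theorem clift_coe {T₀ T₁ T₂ : Type} (c : T₁ × T₂ → T₀) (t₁ : T₁) (t₂ : T₂) :
    clift c (t₁ : WithOne T₁) (t₂ : WithOne T₂) = ↑(c (t₁, t₂)) := rfl

theorem exists_block_factorization {A₁ A₂ : Type} (w : List (A₁ ⊕ A₂)) :
    ∃ (v₂ : List A₂) (bs : List (A₁ × List A₁ × A₂ × List A₂)) (v₁ : List A₁),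
      w = v₂.map Sum.inr ++ (bs.map blockWord).flatten ++ v₁.map Sum.inl := by
  induction w with
  | nil => exact ⟨[], [], [], rfl⟩
  | cons x w ih =>
    obtain ⟨v₂, bs, v₁, rfl⟩ := ih
    match x, v₂, bs with
    | .inr b, v₂, bs => exact ⟨b :: v₂, bs, v₁, rfl⟩
    | .inl a, b :: v₂, bs => exact ⟨[], (a, [], b, v₂) :: bs, v₁, by simp [blockWord]⟩
    | .inl a, [], (a', u₁, b, u₂) :: bs => exact ⟨[], (a, a' :: u₁, b, u₂) :: bs, v₁, rfl⟩
    | .inl a, [], [] => exact ⟨[], [], a :: v₁, rfl⟩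

/-- A state of the merge semigroup, describing a word `w`: `lead` is the value of its leading
`A₂`-word, while `mid t` and `last t` are the values of the product of blocks and of the trailing
`A₁`-word when `w` is preceded by an `A₁`-word of value `t`.  If `w` starts with an `A₂`-letter,
the block completed by its leading `A₂`-word is not counted in `mid t`. -/
@[ext]
structure MergeState (T₀ T₁ T₂ : Type) where
  lead : WithOne T₂
  mid : WithOne T₁ → WithOne T₀
  last : WithOne T₁ → WithOne T₁

namespace MergeState

variable {A₁ A₂ T₀ T₁ T₂ : Type} [Semigroup T₀] [Semigroup T₁] [Semigroup T₂]

/-- The state of the empty word. -/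
def empty : MergeState T₀ T₁ T₂ where
  lead := 1
  mid _ := 1
  last t := t

/-- The triple `τ w`, read off the state of the word `w`. -/
def values (x : MergeState T₀ T₁ T₂) : WithOne T₂ × WithOne T₀ × WithOne T₁ :=
  (x.lead, x.mid 1, x.last 1)

/-- If `m = ψ_M v` and `x` is the state of the word `w`, then `m • x` is the state of `vw`. -/
instance : SMul (Triple (mergeData T₀ T₁ T₂)) (MergeState T₀ T₁ T₂) where
  smul m x :=
    { lead := m.fst.1.toFun x.lead
      mid := fun t => m.snd (t, x.lead) * x.mid (m.trd.1.toFun t)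
      last := fun t => x.last (m.trd.1.toFun t) }

instance : SemigroupAction (Triple (mergeData T₀ T₁ T₂)) (MergeState T₀ T₁ T₂) where
  mul_smul _ _ _ := MergeState.ext rfl (funext fun _ => mul_assoc _ _ _) rfl

theorem values_smul_empty (m : Triple (mergeData T₀ T₁ T₂)) :
    (m • empty : MergeState T₀ T₁ T₂).values =
      (m.fst.1.toFun 1, m.snd (1, 1), m.trd.1.toFun 1) :=
  Prod.ext rfl (Prod.ext (mul_one _) rfl)

variable (g₁ : A₁ → T₁) (g₂ : A₂ → T₂) (c : T₁ × T₂ → T₀)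

theorem mergeGen_inl_smul (a : A₁) (x : MergeState T₀ T₁ T₂) :
    mergeGen g₁ g₂ c (.inl a) • x =
      ⟨1, fun t => clift c (t * g₁ a) x.lead * x.mid (t * g₁ a), fun t => x.last (t * g₁ a)⟩ :=
  rfl

theorem mergeGen_inr_smul (b : A₂) (x : MergeState T₀ T₁ T₂) :
    mergeGen g₁ g₂ c (.inr b) • x = ⟨g₂ b * x.lead, fun _ => x.mid 1, fun _ => x.last 1⟩ :=
  MergeState.ext rfl (funext fun _ => one_mul _) rfl

theorem wordSMul_map_inl_cons (a : A₁) (v : List A₁) (x : MergeState T₀ T₁ T₂) :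
    wordSMul (mergeGen g₁ g₂ c) ((a :: v).map .inl) x =
      ⟨1, fun t => clift c (t * wordProd g₁ (a :: v)) x.lead * x.mid (t * wordProd g₁ (a :: v)),
        fun t => x.last (t * wordProd g₁ (a :: v))⟩ := by
  induction v generalizing a with
  | nil => simp [wordSMul, wordProd, mergeGen_inl_smul]
  | cons a' v ih =>
    rw [List.map_cons, wordSMul_cons, ih, mergeGen_inl_smul, wordProd_cons g₁ a]
    simp only [clift_one_right, one_mul, mul_assoc]

theorem wordSMul_map_inr_cons (b : A₂) (v : List A₂) (x : MergeState T₀ T₁ T₂) :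
    wordSMul (mergeGen g₁ g₂ c) ((b :: v).map .inr) x =
      ⟨wordProd g₂ (b :: v) * x.lead, fun _ => x.mid 1, fun _ => x.last 1⟩ := by
  induction v generalizing b with
  | nil => simp [wordSMul, wordProd, mergeGen_inr_smul]
  | cons b' v ih =>
    rw [List.map_cons, wordSMul_cons, ih, mergeGen_inr_smul, wordProd_cons g₂ b, mul_assoc]

theorem values_wordSMul_map_inl_empty (v : List A₁) :
    (wordSMul (mergeGen g₁ g₂ c) (v.map .inl) (empty : MergeState T₀ T₁ T₂)).values =
      (1, 1, wordProd g₁ v) := by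
  cases v with
  | nil => rfl
  | cons a v =>
    rw [wordSMul_map_inl_cons]
    exact Prod.ext rfl (Prod.ext (one_mul _) (one_mul _))

theorem values_wordSMul_map_inr (v : List A₂) (x : MergeState T₀ T₁ T₂) :
    (wordSMul (mergeGen g₁ g₂ c) (v.map .inr) x).values =
      (wordProd g₂ v * x.values.1, x.values.2) := by
  cases v with
  | nil => exact Prod.ext (one_mul _).symm rfl
  | cons b v => rw [wordSMul_map_inr_cons]; rfl

theorem values_wordSMul_blockWord (b : A₁ × List A₁ × A₂ × List A₂) {x : MergeState T₀ T₁ T₂}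
    {u : WithOne T₀} {t : WithOne T₁} (hx : x.values = (1, u, t)) :
    (wordSMul (mergeGen g₁ g₂ c) (blockWord b) x).values =
      (1, c (blockVal g₁ g₂ b) * u, t) := by
  obtain ⟨a, v₁, a', v₂⟩ := b
  obtain ⟨lead_eq, mid_eq, last_eq⟩ := by simpa only [values, Prod.mk.injEq] using hx
  rw [blockWord, wordSMul_append, wordSMul_map_inl_cons, wordSMul_map_inr_cons]
  simp only [values, blockVal, lead_eq, mid_eq, last_eq, one_mul, mul_one,
    wordProd_cons_eq_coe_sgProd, clift_coe]

theorem values_wordSMul_flatten_blockWord (bs : List (A₁ × List A₁ × A₂ × List A₂))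
    {x : MergeState T₀ T₁ T₂} {u : WithOne T₀} {t : WithOne T₁} (hx : x.values = (1, u, t)) :
    (wordSMul (mergeGen g₁ g₂ c) (bs.map blockWord).flatten x).values =
      (1, wordProd c (bs.map (blockVal g₁ g₂)) * u, t) := by
  induction bs with
  | nil => simpa [wordSMul, wordProd] using hx
  | cons b bs ih =>
    rw [List.map_cons, List.flatten_cons, wordSMul_append, values_wordSMul_blockWord g₁ g₂ c b ih,
      List.map_cons, wordProd_cons, mul_assoc]

theorem values_wordSMul_factorization (v₂ : List A₂) (bs : List (A₁ × List A₁ × A₂ × List A₂))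
    (v₁ : List A₁) :
    (wordSMul (mergeGen g₁ g₂ c) (v₂.map .inr ++ (bs.map blockWord).flatten ++ v₁.map .inl)
        (empty : MergeState T₀ T₁ T₂)).values =
      (wordProd g₂ v₂, wordProd c (bs.map (blockVal g₁ g₂)), wordProd g₁ v₁) := by
  rw [List.append_assoc, wordSMul_append, wordSMul_append, values_wordSMul_map_inr,
    values_wordSMul_flatten_blockWord g₁ g₂ c bs (values_wordSMul_map_inl_empty g₁ g₂ c v₁),
    mul_one, mul_one]

end MergeState

theorem merge_decomposition_general
    {A₁ A₂ T₀ T₁ T₂ : Type} [Semigroup T₀] [Semigroup T₁] [Semigroup T₂]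
    (g₁ : A₁ → T₁) (g₂ : A₂ → T₂) (c : T₁ × T₂ → T₀)
    (τ : List (A₁ ⊕ A₂) → WithOne T₂ × WithOne T₀ × WithOne T₁)
    (hτ : ∀ (v₂ : List A₂) (bs : List (A₁ × List A₁ × A₂ × List A₂)) (v₁ : List A₁),
      τ (v₂.map Sum.inr ++ (bs.map blockWord).flatten ++ v₁.map Sum.inl) =
        (wordProd g₂ v₂, wordProd c (bs.map (blockVal g₁ g₂)), wordProd g₁ v₁))
    (a : A₁ ⊕ A₂) (l : List (A₁ ⊕ A₂)) :
    let m := sgProd (mergeGen g₁ g₂ c) a l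
    (m.fst.1.toFun 1, m.snd (1, 1), m.trd.1.toFun 1) = τ (a :: l) := by
  intro m
  obtain ⟨v₂, bs, v₁, factorization⟩ := exists_block_factorization (a :: l)
  rw [← MergeState.values_smul_empty, sgProd_smul, factorization, hτ,
    MergeState.values_wordSMul_factorization]

/-- the merge decomposition.  Let `A = A₁ ⊔ A₂`, let
`ψ₁ : A₁⁺ → T₁`, `ψ₂ : A₂⁺ → T₂` and `χ : (T₁ × T₂)⁺ → T₀` be semigroup homomorphisms
(determined by their generator maps `g₁`, `g₂`, `c`), let `ψ_M : A⁺ → T_M` be the merge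
homomorphism into the merge semigroup `T_M = (T₂^♭, S, T₁^♯)`, and let
`τ : A⁺ → T₂^I × T₀^I × T₁^I` be the map sending `w = v₂ u v₁`
(`v₂ ∈ A₂^*`, `u ∈ (A₁⁺A₂⁺)^*`, `v₁ ∈ A₁^*`) to `(ψ₂ v₂, ψ₀ u, ψ₁ v₁)`.
Then the map `f (r, s, l) := (r I₂, s (I₁, I₂), l I₁)` satisfies `f ∘ ψ_M = τ`;
in particular there exists `f` with `f ∘ ψ_M = τ`. -/
theorem merge_decomposition
    (A₁ A₂ T₀ T₁ T₂ : Type) [Finite A₁] [Finite A₂]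
    [Semigroup T₀] [Semigroup T₁] [Semigroup T₂] [Finite T₀] [Finite T₁] [Finite T₂]
    (g₁ : A₁ → T₁) (g₂ : A₂ → T₂) (c : T₁ × T₂ → T₀)
    (τ : List (A₁ ⊕ A₂) → WithOne T₂ × WithOne T₀ × WithOne T₁)
    (hτ : ∀ (v₂ : List A₂) (bs : List (A₁ × List A₁ × A₂ × List A₂)) (v₁ : List A₁),
      τ (v₂.map Sum.inr ++ (bs.map blockWord).flatten ++ v₁.map Sum.inl) =
        (wordProd g₂ v₂, wordProd c (bs.map (blockVal g₁ g₂)), wordProd g₁ v₁)) :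
    ∃ f : Triple (mergeData T₀ T₁ T₂) → WithOne T₂ × WithOne T₀ × WithOne T₁,
      f = (fun m => ((m.fst : CompFun (WithOne T₂)).toFun 1, m.snd (1, 1),
            (m.trd : OpCompFun (WithOne T₁)).toFun 1)) ∧
      ∀ (a : A₁ ⊕ A₂) (l : List (A₁ ⊕ A₂)),
        f (sgProd (mergeGen g₁ g₂ c) a l) = τ (a :: l) :=
  ⟨_, rfl, merge_decomposition_general g₁ g₂ c τ hτ⟩
end

section
/- Let S be a finite semigroup and let T₁, T₂ be subsemigroups of S such that T₁ ∪ T₂ generates S. Let T₀ := ⟨T₁T₂⟩ be the subsemigroup of S generated by {t₁t₂ : t₁ ∈ T₁, t₂ ∈ T₂}. Then S divides the triple product (T₂^♭, F, T₁^♯), where F is the semigroup of all functions T₁^I × T₂^I → T₀^I under pointwise multiplication, with left action of T₁^♯ given by (l·s)(t₁,t₂) := s(l(t₁), t₂) and right action of T₂^♭ given by (s·r)(t₁,t₂) := s(t₁, r(t₂)). -/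
open Pointwise

/-- A semigroup `S` *divides* a semigroup `T` if `S` is a homomorphic image of a
subsemigroup of `T`. -/
def Divides (S : Type) [Mul S] (T : Type) [Mul T] : Prop :=
  ∃ (U : Subsemigroup T) (f : U →ₙ* S), Function.Surjective f

/-- A semilattice: a commutative semigroup in which every element is idempotent. -/
def IsSemilattice (S : Type) [Mul S] : Prop :=
  (∀ a b : S, a * b = b * a) ∧ ∀ a : S, a * a = a

/-- The data of a two-sided semidirect product `S ⋈ T`: a left action and a right
action of `T` on `S` satisfying the usual axioms. -/
structure BowtieData (S T : Type) [Semigroup S] [Semigroup T] where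
  lact : T → S → S
  ract : S → T → S
  lact_mul : ∀ t s s', lact t (s * s') = lact t s * lact t s'
  mul_ract : ∀ s s' t, ract (s * s') t = ract s t * ract s' t
  mul_lact : ∀ t t' s, lact (t * t') s = lact t (lact t' s)
  ract_mul : ∀ s t t', ract s (t * t') = ract (ract s t) t'
  lact_ract : ∀ t s t', ract (lact t s) t' = lact t (ract s t')

/-- The underlying set of the two-sided semidirect product `S ⋈ T`. -/
structure Bowtie {S T : Type} [Semigroup S] [Semigroup T] (d : BowtieData S T) where
  fst : S
  snd : T

instance {S T : Type} [Semigroup S] [Semigroup T] (d : BowtieData S T) :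
    Mul (Bowtie d) :=
  ⟨fun a b => ⟨d.ract a.fst b.snd * d.lact a.snd b.fst, a.snd * b.snd⟩⟩

theorem Bowtie.mul_def {S T : Type} [Semigroup S] [Semigroup T] {d : BowtieData S T}
    (a b : Bowtie d) :
    a * b = ⟨d.ract a.fst b.snd * d.lact a.snd b.fst, a.snd * b.snd⟩ := rfl

/-- The two-sided semidirect product is a semigroup. -/
instance {S T : Type} [Semigroup S] [Semigroup T] (d : BowtieData S T) :
    Semigroup (Bowtie d) where
  mul_assoc a b c := by
    simp only [Bowtie.mul_def, Bowtie.mk.injEq]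
    exact ⟨by simp only [d.mul_ract, d.mul_lact, d.ract_mul, d.lact_mul, d.lact_ract,
      mul_assoc], mul_assoc _ _ _⟩

instance {S T : Type} [Semigroup S] [Semigroup T] [Finite S] [Finite T]
    (d : BowtieData S T) : Finite (Bowtie d) :=
  Finite.of_surjective (fun p : S × T => Bowtie.mk p.1 p.2) fun b => ⟨(b.fst, b.snd), rfl⟩
/-!
Read a word over `T₁ ∪ T₂` with value `g`, preceded by a pending `T₁`-block `t₁ ∈ T₁^I` and followed
by a pending `T₂`-block `t₂ ∈ T₂^I`. Each passage from a `T₁`-block to a `T₂`-block emits the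
product of the two blocks, an element of `T₀`; what remains is a leading `T₂`-block and a trailing
`T₁`-block. The trailing block depends on `t₁` through an element `l` of `T₁^♯`, constant once the
word has a letter in `T₂`; the leading block depends on `t₂` through an element `r` of `T₂^♭`; the
emitted product is a function `s` of `(t₁, t₂)`. Concatenation of words multiplies the triples
`(r, s, l)` as in the triple product, and `t₁ = t₂ = I` recovers `g`.
-/

section Divides

variable {R : Type*} {S T : Type}

theorem Divides.of_injective_of_surjective [Mul R] [Mul S] [Mul T] (p : R →ₙ* T) (q : R →ₙ* S)
    (hp : Function.Injective p) (hq : Function.Surjective q) : Divides S T :=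
  let e : R ≃* p.srange := MulEquiv.ofBijective p.srangeRestrict
    ⟨fun _ _ h => hp (congrArg Subtype.val h), p.srangeRestrict_surjective⟩
  ⟨p.srange, q.comp e.symm.toMulHom, hq.comp e.symm.surjective⟩

theorem Divides.of_prod_subsemigroup [Mul S] [Mul T] (R : Subsemigroup (T × S))
    (functional : ∀ {x g g'}, (x, g) ∈ R → (x, g') ∈ R → g = g')
    (surjective : R.map (MulHom.snd T S) = ⊤) : Divides S T := by
  refine .of_injective_of_surjective ((MulHom.fst T S).comp (MulMemClass.subtype R))
    ((MulHom.snd T S).comp (MulMemClass.subtype R)) ?_ ?_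
  · rintro ⟨⟨x, g⟩, hg⟩ ⟨⟨y, g'⟩, hg'⟩ (rfl : x = y)
    exact Subtype.ext (Prod.ext rfl (functional hg hg'))
  · intro g
    obtain ⟨x, hx, rfl⟩ : g ∈ R.map (MulHom.snd T S) := surjective ▸ Subsemigroup.mem_top g
    exact ⟨⟨x, hx⟩, rfl⟩

end Divides

theorem withOne_mul_eq_one {α : Type*} [Mul α] {x y : WithOne α} :
    x * y = 1 ↔ x = 1 ∧ y = 1 := by
  cases x using WithOne.recOneCoe <;> cases y using WithOne.recOneCoe <;>
    simp [← WithOne.coe_mul]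

theorem mul_eq_mul_of_eq_one_or_eq_one {M : Type*} [Monoid M] {u v a b c d : M}
    (hu : u * b = a * c) (hv : c * v = b * d) (h : b = 1 ∨ c = 1) : u * v = a * d := by
  obtain rfl | rfl := h
  · simp only [mul_one, one_mul] at hu hv
    rw [hu, mul_assoc, hv]
  · simp only [mul_one, one_mul] at hu hv
    rw [hv, ← mul_assoc, hu]

section Translations

variable {T : Type} [Semigroup T]

/-- The left translation `λ_t`, as an element of `T^♭`. -/
def Flat.translation (t : T) : Flat T := ⟨⟨fun x => t * x⟩, .inl ⟨t, rfl⟩⟩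

/-- The constant map `t^♭`, as an element of `T^♭`. -/
def Flat.const_s5 (t : WithOne T) : Flat T := ⟨⟨fun _ => t⟩, .inr ⟨t, rfl⟩⟩

/-- The right translation `ρ_t`, as an element of `T^♯`. -/
def Sharp.translation (t : T) : Sharp T := ⟨⟨fun x => x * t⟩, .inl ⟨t, rfl⟩⟩

/-- The constant map `t^♯`, as an element of `T^♯`. -/
def Sharp.const_s5 (t : WithOne T) : Sharp T := ⟨⟨fun _ => t⟩, .inr ⟨t, rfl⟩⟩

end Translations

section Merge

variable {S T₀ T₁ T₂ : Type} [Semigroup S] [Semigroup T₀] [Semigroup T₁] [Semigroup T₂]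
  (φ₀ : T₀ →ₙ* S) (φ₁ : T₁ →ₙ* S) (φ₂ : T₂ →ₙ* S)

open WithOne (mapMulHom)

open Classical in
/-- The triple `x = (r, s, l)` represents `g` if, in every context `(t₁, t₂)`, the leading block
`r(t₂)`, the emitted product `s(t₁, t₂)` and the trailing block `l(t₁)` multiply to `t₁ g t₂` in
`S^I`. Two corrections avoid counting a block twice: if `t₂ ≠ I` then `l(t₁)` is omitted, as it is
already merged into `s(t₁, t₂)`, and if `r(t₂) ≠ I` then `t₁` is omitted, as it merges with `r(t₂)`
in the context. -/
def Represents (x : Triple (mergeData T₀ T₁ T₂)) (g : S) : Prop :=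
  ∀ (t₁ : WithOne T₁) (t₂ : WithOne T₂),
    mapMulHom φ₂ (x.fst.1.toFun t₂) * mapMulHom φ₀ (x.snd (t₁, t₂)) *
        (if t₂ = 1 then mapMulHom φ₁ (x.trd.1.toFun t₁) else 1) =
      (if x.fst.1.toFun t₂ = 1 then mapMulHom φ₁ t₁ else 1) * g * mapMulHom φ₂ t₂

variable {φ₀ φ₁ φ₂}

section MulApply

variable (x y : Triple (mergeData T₀ T₁ T₂)) (t₁ : WithOne T₁) (t₂ : WithOne T₂)

theorem mergeData_mul_fst : (x * y).fst.1.toFun t₂ = x.fst.1.toFun (y.fst.1.toFun t₂) := rfl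

theorem mergeData_mul_snd :
    (x * y).snd (t₁, t₂) = x.snd (t₁, y.fst.1.toFun t₂) * y.snd (x.trd.1.toFun t₁, t₂) := rfl

theorem mergeData_mul_trd : (x * y).trd.1.toFun t₁ = y.trd.1.toFun (x.trd.1.toFun t₁) := rfl

end MulApply

-- Once corrected, the trailing `T₁`-block of `x` or the leading `T₂`-block of `y` is `1`, and the
-- other one can be moved from one factor to its neighbour.
theorem Represents.mul {x y : Triple (mergeData T₀ T₁ T₂)} {g h : S}
    (hx : Represents φ₀ φ₁ φ₂ x g) (hy : Represents φ₀ φ₁ φ₂ y h) :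
    Represents φ₀ φ₁ φ₂ (x * y) (g * h) := by
  classical
  intro t₁ t₂
  have one_or_one : (if y.fst.1.toFun t₂ = 1 then mapMulHom φ₁ (x.trd.1.toFun t₁) else 1) = 1 ∨
      mapMulHom φ₂ (y.fst.1.toFun t₂) = 1 := by
    by_cases hr : y.fst.1.toFun t₂ = 1
    · exact .inr (by rw [hr, map_one])
    · exact .inl (if_neg hr)
  have hx' := hx t₁ (y.fst.1.toFun t₂)
  have hy' := hy (x.trd.1.toFun t₁) t₂
  rw [mul_assoc, mul_assoc _ (h : WithOne S)] at hy'
  rw [mergeData_mul_fst, mergeData_mul_snd, mergeData_mul_trd, map_mul, WithOne.coe_mul]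
  simpa only [mul_assoc] using mul_eq_mul_of_eq_one_or_eq_one hx' hy' one_or_one

theorem Represents.unique {x : Triple (mergeData T₀ T₁ T₂)} {g g' : S}
    (h : Represents φ₀ φ₁ φ₂ x g) (h' : Represents φ₀ φ₁ φ₂ x g') : g = g' := by
  simpa only [map_one, mul_one, one_mul, ite_self, WithOne.coe_inj] using
    (h 1 1).symm.trans (h' 1 1)

theorem exists_represents_right (b : T₂) : ∃ x, Represents φ₀ φ₁ φ₂ x (φ₂ b) := by
  refine ⟨⟨Flat.translation b, fun _ => 1, Sharp.const_s5 1⟩, fun t₁ t₂ => ?_⟩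
  simp [Flat.translation, Sharp.const_s5, withOne_mul_eq_one]

theorem exists_represents_left (h₀ : Set.range φ₁ * Set.range φ₂ ⊆ Set.range φ₀) (a : T₁) :
    ∃ x, Represents φ₀ φ₁ φ₂ x (φ₁ a) := by
  classical
  have emit (t₁ : WithOne T₁) (t₂ : WithOne T₂) : ∃ z, mapMulHom φ₀ z *
      (if t₂ = 1 then mapMulHom φ₁ (t₁ * a) else 1) = mapMulHom φ₁ (t₁ * a) * mapMulHom φ₂ t₂ := by
    obtain ⟨c, hc⟩ : ∃ c : T₁, ↑c = t₁ * a := WithOne.ne_one_iff_exists.1 (by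
      simp [withOne_mul_eq_one])
    cases t₂ using WithOne.recOneCoe with
    | one => exact ⟨1, by simp⟩
    | coe b =>
      obtain ⟨z, hz⟩ := h₀ (Set.mul_mem_mul (Set.mem_range_self c) (Set.mem_range_self b))
      exact ⟨z, by simp [← hc, hz]⟩
  choose s hs using emit
  refine ⟨⟨Flat.const_s5 1, fun t => s t.1 t.2, Sharp.translation a⟩, fun t₁ t₂ => ?_⟩
  simpa [Flat.const_s5, Sharp.translation] using hs t₁ t₂

variable (φ₀ φ₁ φ₂)

/-- The relation `Represents` as a subsemigroup of the product: the graph of a partial homomorphism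
from the triple product to `S`. -/
def representation : Subsemigroup (Triple (mergeData T₀ T₁ T₂) × S) where
  carrier := {p | Represents φ₀ φ₁ φ₂ p.1 p.2}
  mul_mem' := Represents.mul

theorem divides_merge_triple_product_general
    (hgen : Subsemigroup.closure (Set.range φ₁ ∪ Set.range φ₂) = ⊤)
    (h₀ : Set.range φ₁ * Set.range φ₂ ⊆ Set.range φ₀) :
    Divides S (Triple (mergeData T₀ T₁ T₂)) := by
  refine .of_prod_subsemigroup (representation φ₀ φ₁ φ₂) Represents.unique ?_
  rw [eq_top_iff, ← hgen, Subsemigroup.closure_le]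
  rintro _ (⟨a, rfl⟩ | ⟨b, rfl⟩)
  · obtain ⟨x, hx⟩ := exists_represents_left h₀ a
    exact ⟨(x, φ₁ a), hx, rfl⟩
  · obtain ⟨x, hx⟩ : ∃ x, Represents φ₀ φ₁ φ₂ x (φ₂ b) := exists_represents_right b
    exact ⟨(x, φ₂ b), hx, rfl⟩

end Merge

/-- If `S` is a finite semigroup generated by the union of two
subsemigroups `T₁`, `T₂`, and `T₀ = ⟨T₁T₂⟩` is the subsemigroup generated by the setwise
product `T₁T₂`, then `S` divides the triple product `(T₂^♭, F, T₁^♯)`, where `F` is the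
semigroup of functions `T₁^I × T₂^I → T₀^I` under pointwise product, with the left action
`(l · s)(t₁, t₂) = s (l t₁, t₂)` of `T₁^♯` and the right action
`(s · r)(t₁, t₂) = s (t₁, r t₂)` of `T₂^♭`. -/
theorem divides_merge_triple_product
    (S : Type) [Semigroup S] [Finite S] (T₁ T₂ : Subsemigroup S)
    (hgen : Subsemigroup.closure ((T₁ : Set S) ∪ (T₂ : Set S)) = ⊤) :
    Divides S
      (Triple (mergeData (↥(Subsemigroup.closure ((T₁ : Set S) * (T₂ : Set S)))) ↥T₁ ↥T₂)) :=
  divides_merge_triple_product_general (MulMemClass.subtype _) (MulMemClass.subtype T₁)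
    (MulMemClass.subtype T₂) (by simpa using hgen) (by simp)
end

section
/- Let m, n ≥ 1, let T₀ ∈ SL^m and T₁, T₂ ∈ SL^n be finite semigroups, and let F be the semigroup of all functions T₁^I × T₂^I → T₀^I under pointwise multiplication. Then for any left action of T₁^♯ on F and any right action of T₂^♭ on F satisfying the triple-product axioms, the triple product (T₂^♭, F, T₁^♯) belongs to SL^{m+n+1}. -/
open Pointwise

/-- A bundled finite semigroup. -/
structure FinSgr where
  carrier : Type
  str : Semigroup carrier
  fin : Finite carrier

attribute [instance] FinSgr.str FinSgr.fin

/-- The classes `SL^k` of finite semigroups: `SL^1` is the class of finite semilattices,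
and `SL^(k+1)` is the class of finite semigroups dividing some two-sided semidirect
product `A ⋈ B` with `A` a finite semilattice and `B ∈ SL^k`.  (`SL^0` is empty.) -/
def SL : ℕ → FinSgr → Prop
  | 0, _ => False
  | 1, T => IsSemilattice T.carrier
  | (k+2), T =>
      ∃ (A B : FinSgr) (d : BowtieData A.carrier B.carrier),
        IsSemilattice A.carrier ∧ SL (k+1) B ∧ Divides T.carrier (Bowtie d)

/-- Membership of a finite semigroup in the class `SL^k`. -/
def MemSL (k : ℕ) (S : Type) [Semigroup S] [Finite S] : Prop :=
  SL k ⟨S, inferInstance, inferInstance⟩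
/- An iterated product `(A ⋈ C) ⋈ B` embeds, after passing to block products, into
`A^X □ (C^I □ B^I)` for a suitable finite set `X`, so induction on `m` gives
`SL^m ⋈ SL^n ⊆ SL^(m+n)`. A triple product `(S_R, F, S_L)` is a two-sided semidirect product of `F`
by `S_R × S_L`, so it only remains to see that adjoining constants to `T` costs one more level:
the constant `c` is recorded as the singleton `{c}` in the semilattice of sets of values, and the
maps in question become the affine maps `Q ↦ P ∪ m • Q`. -/

theorem Divides.of_span {S T V : Type} [Mul S] [Mul T] [Mul V] (f : V →ₙ* S) (g : V →ₙ* T)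
    (hf : Function.Surjective f) (hg : Function.Injective g) : Divides S T :=
  let e : V ≃* g.srange := MulEquiv.ofBijective g.srangeRestrict
    ⟨fun _ _ h => hg (congrArg Subtype.val h), g.srangeRestrict_surjective⟩
  ⟨g.srange, f.comp (e.symm : g.srange →ₙ* V), hf.comp e.symm.surjective⟩

theorem Divides.of_injective {S T : Type} [Mul S] [Mul T] (f : S →ₙ* T)
    (hf : Function.Injective f) : Divides S T :=
  .of_span (MulHom.id S) f Function.surjective_id hf

section Divides

variable {S T V S' T' : Type} [Mul S] [Mul T] [Mul V] [Mul S'] [Mul T']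

theorem Divides.trans (hST : Divides S T) (hTV : Divides T V) : Divides S V := by
  obtain ⟨U, f, hf⟩ := hST
  obtain ⟨W, g, hg⟩ := hTV
  refine .of_span (f.comp (g.subsemigroupComap U))
    ((MulMemClass.subtype W).comp (MulMemClass.subtype (U.comap g))) (fun s => ?_)
    (Subtype.val_injective.comp Subtype.val_injective)
  obtain ⟨u, rfl⟩ := hf s
  obtain ⟨w, hw⟩ := hg u
  exact ⟨⟨w, by simp [hw]⟩, congrArg f (Subtype.ext hw)⟩

theorem Divides.pi (h : Divides S T) (Y : Type) : Divides (Y → S) (Y → T) := by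
  obtain ⟨U, f, hf⟩ := h
  exact .of_span (f.compLeft Y) ((MulMemClass.subtype U).compLeft Y) hf.comp_left
    Subtype.val_injective.comp_left

theorem Divides.prod (h : Divides S T) (h' : Divides S' T') : Divides (S × S') (T × T') := by
  obtain ⟨U, f, hf⟩ := h
  obtain ⟨U', f', hf'⟩ := h'
  exact .of_span (f.prodMap f') ((MulMemClass.subtype U).prodMap (MulMemClass.subtype U'))
    (hf.prodMap hf') (Subtype.val_injective.prodMap Subtype.val_injective)

theorem Divides.withOne (h : Divides S T) : Divides (WithOne S) (WithOne T) := by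
  obtain ⟨U, f, hf⟩ := h
  have hsurj : Function.Surjective (WithOne.mapMulHom f) :=
    WithOne.forall.2 ⟨⟨1, rfl⟩, hf.forall.2 fun u => ⟨u, rfl⟩⟩
  exact .of_span (WithOne.mapMulHom f : WithOne U →ₙ* WithOne S)
    (WithOne.mapMulHom (MulMemClass.subtype U) : WithOne U →ₙ* WithOne T)
    hsurj (WithOne.mapMulHom_injective Subtype.val_injective)

theorem Divides.op (h : Divides S T) : Divides Sᵐᵒᵖ Tᵐᵒᵖ := by
  obtain ⟨U, f, hf⟩ := h
  exact .of_span (MulHom.op f) (MulHom.op (MulMemClass.subtype U))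
    (MulOpposite.op_surjective.comp (hf.comp MulOpposite.unop_surjective))
    (MulOpposite.op_injective.comp (Subtype.val_injective.comp MulOpposite.unop_injective))

end Divides

section IsSemilattice

variable {S T : Type} [Mul S] [Mul T]

theorem IsSemilattice.of_divides (hT : IsSemilattice T) (h : Divides S T) : IsSemilattice S := by
  obtain ⟨U, f, hf⟩ := h
  refine ⟨hf.forall₂.2 fun a b => ?_, hf.forall.2 fun a => ?_⟩
  · rw [← map_mul, ← map_mul, show a * b = b * a from Subtype.ext (hT.1 a b)]
  · rw [← map_mul, show a * a = a from Subtype.ext (hT.2 a)]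

theorem IsSemilattice.pi (hS : IsSemilattice S) (Y : Type) : IsSemilattice (Y → S) :=
  ⟨fun _ _ => funext fun _ => hS.1 _ _, fun _ => funext fun _ => hS.2 _⟩

theorem IsSemilattice.prod (hS : IsSemilattice S) (hT : IsSemilattice T) : IsSemilattice (S × T) :=
  ⟨fun _ _ => Prod.ext (hS.1 _ _) (hT.1 _ _), fun _ => Prod.ext (hS.2 _) (hT.2 _)⟩

theorem IsSemilattice.withOne (hS : IsSemilattice S) : IsSemilattice (WithOne S) := by
  refine ⟨fun a b => ?_, fun a => ?_⟩
  · cases a <;> cases b <;> simp [← WithOne.coe_mul, hS.1]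
  · cases a <;> simp [← WithOne.coe_mul, hS.2]

theorem IsSemilattice.op (hS : IsSemilattice S) : IsSemilattice Sᵐᵒᵖ :=
  ⟨fun _ _ => congrArg MulOpposite.op (hS.1 _ _), fun _ => congrArg MulOpposite.op (hS.2 _)⟩

end IsSemilattice

attribute [ext] Bowtie

namespace BowtieData

variable {S T S' T' : Type} [Semigroup S] [Semigroup T] [Semigroup S'] [Semigroup T']

/-- The unique pair of actions of `T` on the one-element semigroup. -/
def unit (T : Type) [Semigroup T] : BowtieData Unit T where
  lact _ _ := ()
  ract _ _ := ()
  lact_mul _ _ _ := rfl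
  mul_ract _ _ _ := rfl
  mul_lact _ _ _ := rfl
  ract_mul _ _ _ := rfl
  lact_ract _ _ _ := rfl

/-- The pointwise actions of `T^Y` on `S^Y`. -/
def pi (d : BowtieData S T) (Y : Type) : BowtieData (Y → S) (Y → T) where
  lact t s y := d.lact (t y) (s y)
  ract s t y := d.ract (s y) (t y)
  lact_mul _ _ _ := funext fun _ => d.lact_mul _ _ _
  mul_ract _ _ _ := funext fun _ => d.mul_ract _ _ _
  mul_lact _ _ _ := funext fun _ => d.mul_lact _ _ _
  ract_mul _ _ _ := funext fun _ => d.ract_mul _ _ _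
  lact_ract _ _ _ := funext fun _ => d.lact_ract _ _ _

/-- The componentwise actions of `T × T'` on `S × S'`. -/
def prod (d : BowtieData S T) (d' : BowtieData S' T') : BowtieData (S × S') (T × T') where
  lact t s := (d.lact t.1 s.1, d'.lact t.2 s.2)
  ract s t := (d.ract s.1 t.1, d'.ract s.2 t.2)
  lact_mul _ _ _ := Prod.ext (d.lact_mul _ _ _) (d'.lact_mul _ _ _)
  mul_ract _ _ _ := Prod.ext (d.mul_ract _ _ _) (d'.mul_ract _ _ _)
  mul_lact _ _ _ := Prod.ext (d.mul_lact _ _ _) (d'.mul_lact _ _ _)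
  ract_mul _ _ _ := Prod.ext (d.ract_mul _ _ _) (d'.ract_mul _ _ _)
  lact_ract _ _ _ := Prod.ext (d.lact_ract _ _ _) (d'.lact_ract _ _ _)

/-- The actions of the opposite semigroup of `T` on that of `S`, left and right interchanged. -/
def op (d : BowtieData S T) : BowtieData Sᵐᵒᵖ Tᵐᵒᵖ where
  lact t s := .op (d.ract s.unop t.unop)
  ract s t := .op (d.lact t.unop s.unop)
  lact_mul _ _ _ := congrArg MulOpposite.op (d.mul_ract _ _ _)
  mul_ract _ _ _ := congrArg MulOpposite.op (d.lact_mul _ _ _)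
  mul_lact _ _ _ := congrArg MulOpposite.op (d.ract_mul _ _ _)
  ract_mul _ _ _ := congrArg MulOpposite.op (d.mul_lact _ _ _)
  lact_ract _ _ _ := congrArg MulOpposite.op (d.lact_ract _ _ _).symm

/-- The actions of `T` on `S^I` which fix the adjoined identity. -/
def adjoinOneLeft (d : BowtieData S T) : BowtieData (WithOne S) T where
  lact t := WithOne.mapMulHom ⟨d.lact t, d.lact_mul t⟩
  ract s t := WithOne.mapMulHom ⟨(d.ract · t), (d.mul_ract · · t)⟩ s
  lact_mul _ _ _ := map_mul _ _ _
  mul_ract _ _ _ := map_mul _ _ _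
  mul_lact t t' s := by cases s <;> simp [d.mul_lact]
  ract_mul s t t' := by cases s <;> simp [d.ract_mul]
  lact_ract t s t' := by cases s <;> simp [d.lact_ract]

/-- The actions of `T^I` on `S` in which the adjoined identity acts trivially. -/
def adjoinOneRight (d : BowtieData S T) : BowtieData S (WithOne T) where
  lact t s := t.recOneCoe s (d.lact · s)
  ract s t := t.recOneCoe s (d.ract s ·)
  lact_mul t s s' := by cases t <;> simp [d.lact_mul]
  mul_ract s s' t := by cases t <;> simp [d.mul_ract]
  mul_lact t t' s := by cases t <;> cases t' <;> simp [← WithOne.coe_mul, d.mul_lact]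
  ract_mul s t t' := by cases t <;> cases t' <;> simp [← WithOne.coe_mul, d.ract_mul]
  lact_ract t s t' := by cases t <;> cases t' <;> simp [d.lact_ract]

/-- A monoid `T` acts unitally if its identity acts as the identity map on both sides. -/
structure IsUnital {S T : Type} [Semigroup S] [Monoid T] (d : BowtieData S T) : Prop where
  one_lact : ∀ s, d.lact 1 s = s
  ract_one : ∀ s, d.ract s 1 = s

theorem adjoinOneRight_isUnital (d : BowtieData S T) : d.adjoinOneRight.IsUnital :=
  ⟨fun _ => rfl, fun _ => rfl⟩

theorem bowtie_divides_adjoinOneRight (d : BowtieData S T) :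
    Divides (Bowtie d) (Bowtie d.adjoinOneRight) :=
  .of_injective ⟨fun p => ⟨p.fst, p.snd⟩, fun _ _ => rfl⟩ fun _ _ h => by
    obtain ⟨hfst, hsnd⟩ := Bowtie.ext_iff.1 h
    exact Bowtie.ext hfst (WithOne.coe_injective hsnd)

theorem withOne_bowtie_divides (d : BowtieData S T) :
    Divides (WithOne (Bowtie d)) (Bowtie d.adjoinOneLeft.adjoinOneRight) := by
  let f (x : WithOne (Bowtie d)) : Bowtie d.adjoinOneLeft.adjoinOneRight :=
    x.recOneCoe ⟨1, 1⟩ fun p => ⟨p.fst, p.snd⟩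
  refine .of_injective ⟨f, fun x y => ?_⟩ fun x y h => ?_
  · cases x <;> cases y <;> rfl
  · cases x <;> cases y <;> simp_all [f, Bowtie.ext_iff]

theorem pi_bowtie_divides (d : BowtieData S T) (Y : Type) :
    Divides (Y → Bowtie d) (Bowtie (d.pi Y)) :=
  .of_injective ⟨fun f => ⟨fun y => (f y).fst, fun y => (f y).snd⟩, fun _ _ => rfl⟩ fun _ _ h =>
    funext fun y =>
      Bowtie.ext (congrFun (congrArg Bowtie.fst h) y) (congrFun (congrArg Bowtie.snd h) y)

theorem prod_bowtie_divides (d : BowtieData S T) (d' : BowtieData S' T') :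
    Divides (Bowtie d × Bowtie d') (Bowtie (d.prod d')) :=
  .of_injective ⟨fun p => ⟨(p.1.fst, p.2.fst), (p.1.snd, p.2.snd)⟩, fun _ _ => rfl⟩ fun _ _ h => by
    obtain ⟨hfst, hsnd⟩ := Bowtie.ext_iff.1 h
    exact Prod.ext (Bowtie.ext (congrArg Prod.fst hfst) (congrArg Prod.fst hsnd))
      (Bowtie.ext (congrArg Prod.snd hfst) (congrArg Prod.snd hsnd))

theorem op_bowtie_divides (d : BowtieData S T) : Divides (Bowtie d)ᵐᵒᵖ (Bowtie d.op) :=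
  .of_injective ⟨fun p => ⟨.op p.unop.fst, .op p.unop.snd⟩, fun _ _ => rfl⟩ fun _ _ h => by
    obtain ⟨hfst, hsnd⟩ := Bowtie.ext_iff.1 h
    exact MulOpposite.unop_injective
      (Bowtie.ext (MulOpposite.op_injective hfst) (MulOpposite.op_injective hsnd))

end BowtieData

instance {α : Type} [Finite α] : Finite αᵐᵒᵖ :=
  Finite.of_injective MulOpposite.unop MulOpposite.unop_injective

theorem memSL_one_iff {S : Type} [Semigroup S] [Finite S] : MemSL 1 S ↔ IsSemilattice S :=
  Iff.rfl

namespace MemSL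

variable {k m n : ℕ} {S T A B : Type} [Semigroup S] [Finite S] [Semigroup T] [Finite T]
  [Semigroup A] [Finite A] [Semigroup B] [Finite B]

theorem one_le (h : MemSL k S) : 1 ≤ k := by
  cases k with
  | zero => exact h.elim
  | succ k => exact Nat.le_add_left 1 k

theorem succ_of_divides (hA : IsSemilattice A) (hB : MemSL k B) (d : BowtieData A B)
    (h : Divides S (Bowtie d)) : MemSL (k + 1) S := by
  obtain ⟨k, rfl⟩ := Nat.exists_eq_add_of_le' hB.one_le
  exact ⟨⟨A, inferInstance, inferInstance⟩, ⟨B, inferInstance, inferInstance⟩, d, hA, hB, h⟩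

theorem exists_divides_bowtie (hk : 1 ≤ k) (h : MemSL (k + 1) S) :
    ∃ (A B : FinSgr) (d : BowtieData A.carrier B.carrier),
      IsSemilattice A.carrier ∧ MemSL k B.carrier ∧ Divides S (Bowtie d) := by
  obtain ⟨k, rfl⟩ := Nat.exists_eq_add_of_le' hk
  exact h

theorem induction
    {motive : ∀ (k : ℕ) (S : Type) [Semigroup S] [Finite S], MemSL k S → Prop}
    (semilattice : ∀ (S : Type) [Semigroup S] [Finite S] (h : IsSemilattice S), motive 1 S h)
    (bowtie : ∀ (k : ℕ) (S A B : Type) [Semigroup S] [Finite S] [Semigroup A] [Finite A]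
      [Semigroup B] [Finite B] (d : BowtieData A B) (hA : IsSemilattice A) (hB : MemSL k B)
      (h : Divides S (Bowtie d)),
      (∀ (T : Type) [Semigroup T] [Finite T] (hT : MemSL k T), motive k T hT) →
      motive (k + 1) S (succ_of_divides hA hB d h))
    (h : MemSL k S) : motive k S h := by
  induction k generalizing S with
  | zero => exact h.elim
  | succ k ih =>
    obtain rfl | hk := k.eq_zero_or_pos
    · exact semilattice S h
    · obtain ⟨A, B, d, hA, hB, hS⟩ := exists_divides_bowtie hk h
      exact bowtie k S A.carrier B.carrier d hA hB hS fun T _ _ => ih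

theorem of_divides (hT : MemSL k T) (h : Divides S T) : MemSL k S := by
  induction hT using MemSL.induction with
  | semilattice T hT => exact hT.of_divides h
  | bowtie k T A B d hA hB hT => exact succ_of_divides hA hB d (h.trans hT)

theorem succ (h : MemSL k S) : MemSL (k + 1) S :=
  succ_of_divides ⟨fun _ _ => rfl, fun _ => rfl⟩ h (.unit S) <|
    .of_injective ⟨fun s => ⟨(), s⟩, fun _ _ => rfl⟩ fun _ _ => congrArg Bowtie.snd

theorem mono (h : MemSL m S) (hmn : m ≤ n) : MemSL n S :=
  monotone_nat_of_le_succ (f := fun k => MemSL k S) (fun _ => succ) hmn h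

theorem pi (h : MemSL k S) (Y : Type) [Finite Y] : MemSL k (Y → S) := by
  induction h using MemSL.induction with
  | semilattice S h => exact memSL_one_iff.2 (h.pi Y)
  | bowtie k S A B d hA hB h ih =>
    exact succ_of_divides (hA.pi Y) (ih B hB) (d.pi Y) ((h.pi Y).trans (d.pi_bowtie_divides Y))

theorem prod (hS : MemSL k S) (hT : MemSL k T) : MemSL k (S × T) := by
  induction hS using MemSL.induction generalizing T with
  | semilattice S hS => exact memSL_one_iff.2 (hS.prod hT)
  | bowtie k S A B d hA hB hS ih =>
    obtain ⟨A', B', d', hA', hB', hT'⟩ := exists_divides_bowtie hB.one_le hT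
    exact succ_of_divides (hA.prod hA') (ih B hB hB') (d.prod d')
      ((hS.prod hT').trans (d.prod_bowtie_divides d'))

theorem withOne (h : MemSL k S) : MemSL k (WithOne S) := by
  induction h using MemSL.induction with
  | semilattice S h => exact memSL_one_iff.2 h.withOne
  | bowtie k S A B d hA hB h ih =>
    exact succ_of_divides hA.withOne (ih B hB) d.adjoinOneLeft.adjoinOneRight
      (h.withOne.trans d.withOne_bowtie_divides)

theorem op (h : MemSL k S) : MemSL k Sᵐᵒᵖ := by
  induction h using MemSL.induction with
  | semilattice S h => exact memSL_one_iff.2 h.op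
  | bowtie k S A B d hA hB h ih =>
    exact succ_of_divides hA.op (ih B hB) d.op (h.op.trans d.op_bowtie_divides)

theorem of_op (h : MemSL k Sᵐᵒᵖ) : MemSL k S :=
  h.op.of_divides (.of_injective (MulEquiv.opOp S : S →ₙ* Sᵐᵒᵖᵐᵒᵖ) (MulEquiv.opOp S).injective)

end MemSL

/-- The actions of `M` on `S^(M × M)` by translation of the arguments, which define the block
product `S □ M`. -/
@[simps]
def BowtieData.block (S M : Type) [Semigroup S] [Semigroup M] : BowtieData (M × M → S) M where
  lact t f x := f (x.1 * t, x.2)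
  ract f t x := f (x.1, t * x.2)
  lact_mul _ _ _ := rfl
  mul_ract _ _ _ := rfl
  mul_lact _ _ _ := by simp only [mul_assoc]
  ract_mul _ _ _ := by simp only [mul_assoc]
  lact_ract _ _ _ := rfl

/-- The block product `S □ M`: the two-sided semidirect product `S^(M × M) ⋈ M`. -/
abbrev BlockProduct (S M : Type) [Semigroup S] [Semigroup M] : Type :=
  Bowtie (BowtieData.block S M)

theorem Divides.blockProduct {S T M : Type} [Semigroup S] [Semigroup T] [Semigroup M]
    (h : Divides S T) : Divides (BlockProduct S M) (BlockProduct T M) := by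
  obtain ⟨U, f, hf⟩ := h
  refine .of_span (V := BlockProduct U M)
    ⟨fun p => ⟨f ∘ p.fst, p.snd⟩, fun _ _ => Bowtie.ext (funext fun _ => map_mul f _ _) rfl⟩
    ⟨fun p => ⟨Subtype.val ∘ p.fst, p.snd⟩, fun _ _ => rfl⟩ (fun p => ?_) fun _ _ h => ?_
  · obtain ⟨u, hu⟩ := hf.comp_left p.fst
    exact ⟨⟨u, p.snd⟩, Bowtie.ext hu rfl⟩
  · obtain ⟨hfst, hsnd⟩ := Bowtie.ext_iff.1 h
    exact Bowtie.ext (Subtype.val_injective.comp_left hfst) hsnd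

section BlockProduct

variable {S A C M : Type} [Semigroup S] [Semigroup A] [Monoid C] [Monoid M]

theorem BowtieData.IsUnital.bowtie_divides_blockProduct {d : BowtieData S M} (hd : d.IsUnital) :
    Divides (Bowtie d) (BlockProduct S M) := by
  refine .of_injective ⟨fun p => ⟨fun x => d.ract (d.lact x.1 p.fst) x.2, p.snd⟩,
    fun p q => Bowtie.ext (funext fun x => ?_) rfl⟩ fun p q h => ?_
  · simp only [Bowtie.mul_def, block_lact, block_ract, Pi.mul_apply, d.lact_mul, d.mul_ract,
      d.mul_lact, d.ract_mul, d.lact_ract]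
  · obtain ⟨hfst, hsnd⟩ := Bowtie.ext_iff.1 h
    exact Bowtie.ext (by simpa [hd.one_lact, hd.ract_one] using congrFun hfst (1, 1)) hsnd

/- The `A`-coordinate of a product depends on the `C`-coordinates of both factors, at arguments
involving the other factor. Recording it as a function of the contexts `y.1` and `y.2` to the left
and to the right makes it compatible with multiplication; the context `(1, 1)` recovers it. -/
theorem BowtieData.IsUnital.blockProduct_bowtie_divides {d : BowtieData A C} (hd : d.IsUnital) :
    Divides (BlockProduct (Bowtie d) M) (BlockProduct (M × M → A) (BlockProduct C M)) := by
  let inContext (p : BlockProduct (Bowtie d) M) (y : BlockProduct C M × BlockProduct C M)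
      (x : M × M) : A :=
    d.ract (d.lact (y.1.fst (x.1, p.snd * (y.2.snd * x.2)))
      (p.fst (x.1 * y.1.snd, y.2.snd * x.2)).fst) (y.2.fst (x.1 * y.1.snd * p.snd, x.2))
  refine .of_injective ⟨fun p => ⟨inContext p, fun x => (p.fst x).snd, p.snd⟩,
    fun p q => Bowtie.ext (funext fun y => funext fun x => ?_) rfl⟩ fun p q h => ?_
  · simp only [inContext, Bowtie.mul_def, block_lact, block_ract, Pi.mul_apply, d.lact_mul,
      d.mul_ract, d.mul_lact, d.ract_mul, d.lact_ract, mul_assoc]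
  · obtain ⟨hfst, hsnd⟩ := Bowtie.ext_iff.1 h
    obtain ⟨hC, hM⟩ := Bowtie.ext_iff.1 hsnd
    have hA (x : M × M) : (p.fst x).fst = (q.fst x).fst := by
      simpa [inContext, hd.one_lact, hd.ract_one] using congrFun₂ hfst (⟨1, 1⟩, ⟨1, 1⟩) x
    exact Bowtie.ext (funext fun x => Bowtie.ext (hA x) (congrFun hC x)) hM

end BlockProduct

theorem MemSL.bowtie {m n : ℕ} {S T : Type} [Semigroup S] [Finite S] [Semigroup T] [Finite T]
    (hS : MemSL m S) (hT : MemSL n T) (d : BowtieData S T) : MemSL (m + n) (Bowtie d) := by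
  induction hS using MemSL.induction generalizing T with
  | semilattice S hS =>
    rw [Nat.add_comm]
    exact succ_of_divides hS hT d (.of_injective (MulHom.id _) Function.injective_id)
  | bowtie k S A C e hA hC hS ih =>
    rw [Nat.add_right_comm]
    refine succ_of_divides ((hA.pi (WithOne T × WithOne T)).pi _)
      (ih _ (hC.withOne.pi _) hT.withOne (.block (WithOne C) (WithOne T))) (.block _ _) ?_
    have toBlock : Divides (Bowtie d) (BlockProduct S (WithOne T)) :=
      d.bowtie_divides_adjoinOneRight.trans d.adjoinOneRight_isUnital.bowtie_divides_blockProduct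
    exact (toBlock.trans (hS.trans e.bowtie_divides_adjoinOneRight).blockProduct).trans
      e.adjoinOneRight_isUnital.blockProduct_bowtie_divides

section Triple

variable {SR S SL : Type} [Semigroup SR] [Semigroup S] [Semigroup SL]

/-- The actions of `S_R × S_L` on `S`, on the right through `S_R` and on the left through `S_L`. -/
def TripleData.toBowtieData (d : TripleData SR S SL) : BowtieData S (SR × SL) where
  lact t s := d.lact t.2 s
  ract s t := d.ract s t.1
  lact_mul _ _ _ := d.lact_mul _ _ _
  mul_ract _ _ _ := d.mul_ract _ _ _
  mul_lact _ _ _ := d.mul_lact _ _ _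
  ract_mul _ _ _ := d.ract_mul _ _ _
  lact_ract _ _ _ := d.lact_ract _ _ _

theorem TripleData.triple_divides_bowtie (d : TripleData SR S SL) :
    Divides (Triple d) (Bowtie d.toBowtieData) :=
  .of_injective ⟨fun p => ⟨p.snd, (p.fst, p.trd)⟩, fun _ _ => rfl⟩ fun ⟨_, _, _⟩ ⟨_, _, _⟩ h => by
    cases h
    rfl

theorem MemSL.triple {m n : ℕ} [Finite SR] [Finite S] [Finite SL] (hS : MemSL m S)
    (hR : MemSL n SR) (hL : MemSL n SL) (d : TripleData SR S SL) : MemSL (m + n) (Triple d) :=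
  (hS.bowtie (hR.prod hL) d.toBowtieData).of_divides d.triple_divides_bowtie

end Triple

/-- The semigroup of subsets of `α` under union, a separate type because `*` on `Set α` is the
pointwise product. -/
@[ext]
structure UnionSet (α : Type) where
  carrier : Set α

namespace UnionSet

variable {α : Type}

instance : Semigroup (UnionSet α) where
  mul P Q := ⟨P.carrier ∪ Q.carrier⟩
  mul_assoc _ _ _ := congrArg mk (Set.union_assoc _ _ _)

instance [Finite α] : Finite (UnionSet α) :=
  Finite.of_injective carrier fun _ _ => UnionSet.ext

theorem mul_def (P Q : UnionSet α) : P * Q = ⟨P.carrier ∪ Q.carrier⟩ := rfl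

theorem isSemilattice : IsSemilattice (UnionSet α) :=
  ⟨fun _ _ => congrArg mk (Set.union_comm _ _), fun _ => congrArg mk (Set.union_self _)⟩

end UnionSet

/- The pair `(a, b)` acts on `A` by the affine map `q ↦ a * b • q`, and this is an action of the
semidirect product. -/
theorem BowtieData.divides_bowtie_of_affine {S A B X : Type} [Semigroup S] [Semigroup A]
    [Semigroup B] (d : BowtieData A B) (hd : ∀ a b, d.ract a b = a)
    (φ : S →ₙ* Function.End X) (hφ : Function.Injective φ) (ι : X → A) (hι : Function.Injective ι)
    (h : ∀ s, ∃ p : Bowtie d, ∀ x, p.fst * d.lact p.snd (ι x) = ι (φ s x)) :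
    Divides S (Bowtie d) := by
  let V : Subsemigroup (S × Bowtie d) :=
    { carrier := {v | ∀ x, v.2.fst * d.lact v.2.snd (ι x) = ι (φ v.1 x)}
      mul_mem' := fun {v w} hv hw x =>
        calc (v.2 * w.2).fst * d.lact (v.2 * w.2).snd (ι x)
          _ = v.2.fst * d.lact v.2.snd (w.2.fst * d.lact w.2.snd (ι x)) := by
            simp only [Bowtie.mul_def, hd, d.lact_mul, d.mul_lact, mul_assoc]
          _ = ι (φ v.1 (φ w.1 x)) := by rw [hw, hv]
          _ = ι (φ (v.1 * w.1) x) := by rw [map_mul]; rfl }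
  refine .of_span ((MulHom.fst S (Bowtie d)).comp (MulMemClass.subtype V))
    ((MulHom.snd S (Bowtie d)).comp (MulMemClass.subtype V)) (fun s => ?_) ?_
  · obtain ⟨p, hp⟩ := h s
    exact ⟨⟨(s, p), hp⟩, rfl⟩
  · rintro ⟨⟨s, p⟩, hs⟩ ⟨⟨t, _⟩, ht⟩ rfl
    obtain rfl : s = t := hφ (funext fun x => hι ((hs x).symm.trans (ht x)))
    rfl

/-- The left action of `M` on subsets of `X` by images, extended to `M × {0, 1}` so that `(m, 0)`
sends every subset to `∅`; the right action is trivial. The multiplicative semigroup of `ZMod 2`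
serves as the semilattice `{0, 1}`. -/
def resetData (M X : Type) [Monoid M] [MulAction M X] :
    BowtieData (UnionSet X) (M × ZMod 2) where
  lact t P := ⟨if t.2 = 0 then ∅ else t.1 • P.carrier⟩
  ract P _ := P
  lact_mul t P Q := by
    split_ifs <;> simp [UnionSet.mul_def, Set.smul_set_union]
  mul_ract _ _ _ := rfl
  mul_lact t t' P := by
    by_cases h : t.2 = 0 <;> by_cases h' : t'.2 = 0 <;> simp [h, h', mul_smul]
  ract_mul _ _ _ := rfl
  lact_ract _ _ _ := rfl

theorem divides_bowtie_resetData {S M X : Type} [Semigroup S] [Monoid M] [MulAction M X]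
    (φ : S →ₙ* Function.End X) (hφ : Function.Injective φ)
    (h : ∀ s, (∃ m : M, φ s = (m • ·)) ∨ ∃ c, φ s = fun _ => c) :
    Divides S (Bowtie (resetData M X)) := by
  refine (resetData M X).divides_bowtie_of_affine (fun _ _ => rfl) φ hφ (fun x => ⟨{x}⟩)
    (fun x y hxy => by simpa using hxy) fun s => ?_
  obtain ⟨m, hm⟩ | ⟨c, hc⟩ := h s
  · exact ⟨⟨⟨∅⟩, (m, 1)⟩, fun x => by simp [hm, resetData, UnionSet.mul_def]⟩
  · exact ⟨⟨⟨{c}⟩, (1, 0)⟩, fun x => by simp [hc, resetData, UnionSet.mul_def]⟩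

namespace MemSL

variable {k : ℕ}

theorem of_smul_or_const {S M X : Type} [Semigroup S] [Finite S] [Monoid M] [Finite M] [Finite X]
    [MulAction M X] (hM : MemSL k M) (φ : S →ₙ* Function.End X) (hφ : Function.Injective φ)
    (h : ∀ s, (∃ m : M, φ s = (m • ·)) ∨ ∃ c, φ s = fun _ => c) : MemSL (k + 1) S :=
  have isSemilattice_zmod_two : IsSemilattice (ZMod 2) := ⟨by decide, by decide⟩
  have memSL_zmod_two : MemSL k (ZMod 2) := (memSL_one_iff.2 isSemilattice_zmod_two).mono hM.one_le
  succ_of_divides UnionSet.isSemilattice (hM.prod memSL_zmod_two) (resetData M X)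
    (divides_bowtie_resetData φ hφ h)

variable {T : Type} [Semigroup T] [Finite T]

theorem flat (h : MemSL k T) : MemSL (k + 1) (Flat T) := by
  refine h.withOne.of_smul_or_const (X := WithOne T) ⟨fun f => f.1.toFun, fun _ _ => rfl⟩ ?_ ?_
  · rintro ⟨⟨_⟩, _⟩ ⟨⟨_⟩, _⟩ rfl
    rfl
  · rintro ⟨f, ⟨t, ht⟩ | hc⟩
    exacts [.inl ⟨t, ht⟩, .inr hc]

theorem sharp (h : MemSL k T) : MemSL (k + 1) (Sharp T) := by
  refine of_op <| h.withOne.op.of_smul_or_const (X := WithOne T)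
    ⟨fun f => f.unop.1.toFun, fun _ _ => rfl⟩ ?_ ?_
  · rintro ⟨⟨_⟩, _⟩ ⟨⟨_⟩, _⟩ rfl
    rfl
  · rintro ⟨f, ⟨t, ht⟩ | hc⟩
    exacts [.inl ⟨.op t, ht⟩, .inr hc]

end MemSL

theorem merge_triple_product_mem_SL_general
    (m n : ℕ) (F T₁ T₂ : Type) [Semigroup F] [Semigroup T₁] [Semigroup T₂]
    [Finite F] [Finite T₁] [Finite T₂]
    (hF : MemSL m F) (h1 : MemSL n T₁) (h2 : MemSL n T₂)
    (td : TripleData (Flat T₂) F (Sharp T₁)) :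
    MemSL (m + n + 1) (Triple td) :=
  hF.triple h2.flat h1.sharp td

/-- Let `m, n ≥ 1`, let `T₀ ∈ SL^m` and `T₁, T₂ ∈ SL^n` be finite
semigroups, and let `F` be the semigroup of all functions `T₁^I × T₂^I → T₀^I` under
pointwise product.  Then for any left action of `T₁^♯` and right action of `T₂^♭` on `F`
satisfying the triple-product axioms, the triple product `(T₂^♭, F, T₁^♯)` lies in
`SL^(m+n+1)`. -/
theorem merge_triple_product_mem_SL
    (m n : ℕ) (hm : 1 ≤ m) (hn : 1 ≤ n)
    (T₀ T₁ T₂ : Type) [Semigroup T₀] [Semigroup T₁] [Semigroup T₂]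
    [Finite T₀] [Finite T₁] [Finite T₂]
    (h0 : MemSL m T₀) (h1 : MemSL n T₁) (h2 : MemSL n T₂)
    (td : TripleData (↥(Flat T₂)) ((WithOne T₁ × WithOne T₂) → WithOne T₀) (↥(Sharp T₁))) :
    MemSL (m + n + 1) (Triple td) := by
  exact merge_triple_product_mem_SL_general m n _ T₁ T₂ (h0.withOne.pi _) h1 h2 td
end

section
/- Let S be a finite semigroup and let G be a subsemigroup of the power semigroup 2^S that is a group under setwise multiplication (i.e., there is E ∈ G with E·Y = Y·E = Y for all Y ∈ G, and every Y ∈ G has an inverse relative to E). Then ⋃_{X ∈ G} X ∈ Sat(G), i.e., the union of all members of G belongs to every saturated collection of subsets of S containing G. -/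
open Pointwise

/-- The `n`-th power of an element of a semigroup, for `n ≥ 1` (with the junk value
`sgPow t 0 = t`). -/
def sgPow {T : Type} [Mul T] (t : T) : ℕ → T
  | 0 => t
  | 1 => t
  | (n+2) => sgPow t (n+1) * t

/-- A semigroup is aperiodic if for every element `t` there is `n ≥ 1` with
`t^(n+1) = t^n`. -/
def IsAperiodic (T : Type) [Mul T] : Prop :=
  ∀ t : T, ∃ n, 1 ≤ n ∧ sgPow t (n + 1) = sgPow t n
/-- A collection `U` of subsets of a semigroup `S` is saturated if it is closed under
setwise products, under taking subsets, and under the operation sending `X ∈ U` to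
`⋃_{k ≥ n} X^k` whenever `n ≥ 1` and the setwise power `X^n` is idempotent. -/
def Saturated {S : Type} [Semigroup S] (U : Set (Set S)) : Prop :=
  (∀ X ∈ U, ∀ Y ∈ U, X * Y ∈ U) ∧
  (∀ X ∈ U, ∀ Y : Set S, Y ⊆ X → Y ∈ U) ∧
  (∀ X ∈ U, ∀ n, 1 ≤ n → sgPow X n * sgPow X n = sgPow X n → (⋃ k, ⋃ (_ : n ≤ k), sgPow X k) ∈ U)

/-- The saturation of a collection of subsets of `S`: the least saturated collection
containing it.  `X ∈ Sat U₀` iff `X` belongs to every saturated collection containing `U₀`. -/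
def Sat {S : Type} [Semigroup S] (U₀ : Set (Set S)) : Set (Set S) :=
  {X | ∀ U : Set (Set S), Saturated U → U₀ ⊆ U → X ∈ U}

/-!
Taking unions along the inclusion `G → 2^S` is a homomorphism `2^G → 2^S` that commutes with
arbitrary unions, so the preimage of a saturated collection is a saturated collection of subsets
of the group `G` itself, and it contains all singletons if the original collection contains `G`.
It remains to see that it contains `G`.  Closure under `⋃_{k ≥ n} X^k`, applied to a singleton
`{x}`, yields the cyclic subgroup generated by `x`; as each of these contains `1`, the product of
all of them is a member that contains every element of `G`.
-/

theorem sgPow_eq_pow {M : Type} [Monoid M] (x : M) : ∀ {n : ℕ}, n ≠ 0 → sgPow x n = x ^ n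
  | 1, _ => (pow_one x).symm
  | n + 2, _ => by rw [sgPow, sgPow_eq_pow x n.succ_ne_zero, ← pow_succ]

theorem map_sgPow {M N : Type} [Mul M] [Mul N] (f : M →ₙ* N) (x : M) :
    ∀ n : ℕ, f (sgPow x n) = sgPow (f x) n
  | 0 => rfl
  | 1 => rfl
  | n + 2 => by rw [sgPow, sgPow, map_mul, map_sgPow f x (n + 1)]

/-- The extension of a semigroup homomorphism `φ : M → 2^S` to the union-preserving homomorphism
`2^M → 2^S` sending `A` to `⋃_{x ∈ A} φ x`; it is used to transport saturated collections from
`2^S` to `2^M`. -/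
def biUnionHom {M S : Type*} [Mul M] [Mul S] (φ : M →ₙ* Set S) : Set M →ₙ* Set S where
  toFun A := ⋃ x ∈ A, φ x
  map_mul' A B := by
    rw [← Set.image2_mul, Set.biUnion_image2, Set.iUnion₂_mul]
    simp only [map_mul, Set.mul_iUnion₂]

theorem biUnionHom_singleton {M S : Type*} [Mul M] [Mul S] (φ : M →ₙ* Set S) (x : M) :
    biUnionHom φ {x} = φ x :=
  Set.biUnion_singleton x φ

theorem biUnionHom_mono {M S : Type*} [Mul M] [Mul S] (φ : M →ₙ* Set S) :
    Monotone (biUnionHom φ) :=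
  fun _ _ h => Set.biUnion_subset_biUnion_left h

theorem biUnionHom_iUnion {M S : Type*} [Mul M] [Mul S] {ι : Sort*} (φ : M →ₙ* Set S)
    (A : ι → Set M) : biUnionHom φ (⋃ i, A i) = ⋃ i, biUnionHom φ (A i) :=
  Set.biUnion_iUnion A φ

namespace Saturated

theorem preimage_biUnionHom {M S : Type} [Semigroup M] [Semigroup S] {U : Set (Set S)}
    (hU : Saturated U) (φ : M →ₙ* Set S) : Saturated (biUnionHom φ ⁻¹' U) := by
  obtain ⟨mul_mem, mem_of_subset, iUnion_mem⟩ := hU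
  refine ⟨fun A hA B hB => ?_, fun A hA B hBA => ?_, fun A hA n hn idem => ?_⟩
  · rw [Set.mem_preimage, map_mul]
    exact mul_mem _ hA _ hB
  · exact mem_of_subset _ hA _ (biUnionHom_mono φ hBA)
  · simp only [Set.mem_preimage, biUnionHom_iUnion, map_sgPow]
    refine iUnion_mem _ hA n hn ?_
    rw [← map_sgPow, ← map_mul, idem]

variable {M : Type} [Monoid M] {U : Set (Set M)}

theorem powers_mem (hU : Saturated U) {x : M} (hx : IsOfFinOrder x) (hxU : {x} ∈ U) :
    (Submonoid.powers x : Set M) ∈ U := by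
  obtain ⟨-, mem_of_subset, iUnion_mem⟩ := hU
  have sgPow_singleton {k : ℕ} (hk : k ≠ 0) : sgPow ({x} : Set M) k = {x ^ k} := by
    rw [sgPow_eq_pow _ hk, Set.singleton_pow]
  have sgPow_orderOf : sgPow ({x} : Set M) (orderOf x) = 1 := by
    rw [sgPow_singleton hx.orderOf_pos.ne', pow_orderOf_eq_one, Set.singleton_one]
  have tail_mem := iUnion_mem {x} hxU (orderOf x) hx.orderOf_pos (by rw [sgPow_orderOf, mul_one])
  refine mem_of_subset _ tail_mem _ ?_
  rintro _ ⟨k, rfl⟩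
  refine Set.mem_iUnion₂.2 ⟨k + orderOf x, Nat.le_add_left _ _, ?_⟩
  rw [sgPow_singleton (Nat.add_pos_right k hx.orderOf_pos).ne', pow_add, pow_orderOf_eq_one,
    mul_one]
  exact Set.mem_singleton _

theorem insert_one_mem_of_finite (hU : Saturated U) (h_one : {1} ∈ U) {s : Set M}
    (hs : s.Finite) (h_ord : ∀ x ∈ s, IsOfFinOrder x) (h_mem : ∀ x ∈ s, {x} ∈ U) :
    insert 1 s ∈ U := by
  induction s, hs using Set.Finite.induction_on with
  | empty => rwa [insert_empty_eq]
  | @insert x s _ _ ih =>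
    rw [Set.forall_mem_insert] at h_ord h_mem
    have powers_mul_mem : (Submonoid.powers x : Set M) * insert 1 s ∈ U :=
      hU.1 _ (hU.powers_mem h_ord.1 h_mem.1) _ (ih h_ord.2 h_mem.2)
    refine hU.2.1 _ powers_mul_mem _ ?_
    rw [Set.insert_comm, Set.insert_subset_iff]
    exact ⟨Set.mem_mul.2 ⟨x, Submonoid.mem_powers x, 1, Set.mem_insert 1 s, mul_one x⟩,
      Set.subset_mul_right _ (Submonoid.powers x).one_mem⟩

theorem univ_mem {K : Type} [Group K] [Finite K] {U : Set (Set K)}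
    (hU : Saturated U) (h_mem : ∀ x, {x} ∈ U) : Set.univ ∈ U := by
  rw [← Set.insert_eq_of_mem (Set.mem_univ (1 : K))]
  exact hU.insert_one_mem_of_finite (h_mem 1) Set.finite_univ
    (fun x _ => isOfFinOrder_of_finite x) fun x _ => h_mem x

end Saturated

theorem union_of_group_mem_sat_general
    {S : Type} [Semigroup S] (G : Subsemigroup (Set S)) [Finite G]
    (E : Set S) (hE : E ∈ G)
    (hid : ∀ Y ∈ G, E * Y = Y)
    (hinv : ∀ Y ∈ G, ∃ Z ∈ G, Z * Y = E) :
    ⋃₀ (G : Set (Set S)) ∈ Sat (G : Set (Set S)) := by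
  intro U hU hGU
  choose inv inv_mem inv_mul using hinv
  let : One G := ⟨⟨E, hE⟩⟩
  let : Inv G := ⟨fun Y => ⟨inv Y Y.2, inv_mem Y Y.2⟩⟩
  let : Group G := Group.ofLeftAxioms mul_assoc
    (fun Y => Subtype.ext (hid Y Y.2)) (fun Y => Subtype.ext (inv_mul Y Y.2))
  let incl : G →ₙ* Set S := MulMemClass.subtype G
  have singleton_mem (Y : G) : {Y} ∈ biUnionHom incl ⁻¹' U := by
    rw [Set.mem_preimage, biUnionHom_singleton]
    exact hGU Y.2
  have union_eq : biUnionHom incl Set.univ = ⋃₀ (G : Set (Set S)) :=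
    (Set.biUnion_univ incl).trans Set.sUnion_eq_iUnion.symm
  rw [← union_eq]
  exact (hU.preimage_biUnionHom incl).univ_mem singleton_mem

/-- If `G` is a subsemigroup of the power semigroup `2^S` of a finite
semigroup `S` which is a group under setwise multiplication, then the union of all
members of `G` belongs to the saturation of `G`. -/
theorem union_of_group_mem_sat
    (S : Type) [Semigroup S] [Finite S] (G : Subsemigroup (Set S))
    (E : Set S) (hE : E ∈ G)
    (hid : ∀ Y ∈ G, E * Y = Y ∧ Y * E = Y)
    (hinv : ∀ Y ∈ G, ∃ Z ∈ G, Y * Z = E ∧ Z * Y = E) :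
    ⋃₀ (G : Set (Set S)) ∈ Sat (G : Set (Set S)) :=
  union_of_group_mem_sat_general G E hE (fun Y hY => (hid Y hY).1)
    fun Y hY => (hinv Y hY).imp fun _ hZ => ⟨hZ.1, hZ.2.2⟩
end

section
/- Let S be a finite semigroup and let X ⊆ S be aperiodic-pointlike. Then for every n ≥ 1 with X^n·X^n = X^n (setwise powers), the set ⋃_{k ≥ n} X^k is aperiodic-pointlike. -/
/-!
Let `ρ` be a relational morphism into an aperiodic semigroup and let `t` be related to all of `X`.
Then `t ^ k` is related to all of `X ^ k`, and the powers of `t` stabilise at some `t ^ m`, which is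
therefore related to all of `X ^ k` as soon as `k ≥ m`. Small exponents cause no loss: if
`X ^ n ⊆ X ^ (n + p)` with `p ≥ 1`, then every `X ^ k` with `k ≥ n` is contained in some `X ^ l`
with `l ≥ m`. An idempotent power `X ^ n` is the case `p = n`.
-/

open Pointwise

/-- A relational morphism from `S` to `T`: a fully defined relation whose graph is
a subsemigroup of `S × T`. -/
def IsRelMorphism {S T : Type} [Mul S] [Mul T] (ρ : S → Set T) : Prop :=
  (∀ s, (ρ s).Nonempty) ∧ ∀ s s', ρ s * ρ s' ⊆ ρ (s * s')

/-- A subset `X` of a finite semigroup `S` is aperiodic-pointlike if every relational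
morphism from `S` to a finite aperiodic semigroup `T` relates all of `X` to a single
element of `T`. -/
def AperiodicPointlike {S : Type} [Semigroup S] (X : Set S) : Prop :=
  ∀ (T : Type) [Semigroup T] [Finite T], IsAperiodic T →
    ∀ ρ : S → Set T, IsRelMorphism ρ → ∃ t : T, X ⊆ {s : S | t ∈ ρ s}

theorem sgPow_succ {T : Type} [Mul T] (t : T) {k : ℕ} (hk : 1 ≤ k) :
    sgPow t (k + 1) = sgPow t k * t := by
  cases hk <;> rfl

theorem sgPow_add {T : Type} [Semigroup T] (t : T) {a b : ℕ} (ha : 1 ≤ a) (hb : 1 ≤ b) :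
    sgPow t (a + b) = sgPow t a * sgPow t b := by
  induction b, hb using Nat.le_induction with
  | base => exact sgPow_succ t ha
  | succ b hb ih =>
    rw [← add_assoc, sgPow_succ t (le_add_right ha), ih, sgPow_succ t hb, mul_assoc]

theorem sgPow_eq_of_sgPow_succ_eq {T : Type} [Mul T] {t : T} {m k : ℕ} (hm : 1 ≤ m)
    (h : sgPow t (m + 1) = sgPow t m) (hk : m ≤ k) : sgPow t k = sgPow t m := by
  induction k, hk using Nat.le_induction with
  | base => rfl
  | succ k hk ih => rw [sgPow_succ t (hm.trans hk), ih, ← sgPow_succ t hm, h]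

section RightMono

variable {M : Type} [Mul M] [Preorder M] [MulRightMono M] {a : M} {n p k : ℕ}

theorem sgPow_le_sgPow_add (hn : 1 ≤ n) (h : sgPow a n ≤ sgPow a (n + p)) (hk : n ≤ k) :
    sgPow a k ≤ sgPow a (k + p) := by
  induction k, hk using Nat.le_induction with
  | base => exact h
  | succ k hk ih =>
    have hk' : 1 ≤ k := hn.trans hk
    rw [add_right_comm, sgPow_succ a hk', sgPow_succ a (le_add_right hk')]
    exact mul_le_mul_left ih a

theorem sgPow_le_sgPow_add_mul (hn : 1 ≤ n) (h : sgPow a n ≤ sgPow a (n + p)) (hk : n ≤ k)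
    (j : ℕ) : sgPow a k ≤ sgPow a (k + j * p) := by
  induction j with
  | zero => simp
  | succ j ih =>
    rw [Nat.succ_mul, ← add_assoc]
    exact ih.trans (sgPow_le_sgPow_add hn h (le_add_right hk))

end RightMono

theorem IsRelMorphism.sgPow_subset {S T : Type} [Mul S] [Mul T] {ρ : S → Set T}
    (hρ : IsRelMorphism ρ) {X : Set S} {t : T} (hX : X ⊆ {s | t ∈ ρ s}) {k : ℕ} (hk : 1 ≤ k) :
    sgPow X k ⊆ {s | sgPow t k ∈ ρ s} := by
  induction k, hk using Nat.le_induction with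
  | base => exact hX
  | succ k hk ih =>
    rw [sgPow_succ X hk, sgPow_succ t hk]
    rintro _ ⟨a, ha, b, hb, rfl⟩
    exact hρ.2 a b (Set.mul_mem_mul (ih ha) (hX hb))

theorem union_powers_aperiodicPointlike_general {S : Type} [Semigroup S] {X : Set S}
    (h : AperiodicPointlike X) {n p : ℕ} (hn : 1 ≤ n) (hp : 1 ≤ p)
    (hsub : sgPow X n ⊆ sgPow X (n + p)) :
    AperiodicPointlike (⋃ k, ⋃ (_ : n ≤ k), sgPow X k) := by
  intro T _ _ hT ρ hρ
  obtain ⟨t, hXt⟩ := h T hT ρ hρ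
  obtain ⟨m, hm, hstable⟩ := hT t
  refine ⟨sgPow t m, Set.iUnion₂_subset fun k hk ↦ ?_⟩
  have hml : m ≤ k + m * p := le_add_left (Nat.le_mul_of_pos_right m hp)
  calc sgPow X k
      ⊆ sgPow X (k + m * p) := sgPow_le_sgPow_add_mul hn hsub hk m
    _ ⊆ {s | sgPow t (k + m * p) ∈ ρ s} := hρ.sgPow_subset hXt (hm.trans hml)
    _ = {s | sgPow t m ∈ ρ s} := by rw [sgPow_eq_of_sgPow_succ_eq hm hstable hml]

/-- If `X` is an aperiodic-pointlike subset of a finite semigroup `S`,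
then for every `n ≥ 1` such that the setwise power `X^n` is idempotent, the set
`⋃_{k ≥ n} X^k` is aperiodic-pointlike. -/
theorem union_powers_aperiodicPointlike
    (S : Type) [Semigroup S] [Finite S] (X : Set S)
    (h : AperiodicPointlike X)
    (n : ℕ) (hn : 1 ≤ n) (hid : sgPow X n * sgPow X n = sgPow X n) :
    AperiodicPointlike (⋃ k, ⋃ (_ : n ≤ k), sgPow X k) := by
  exact union_powers_aperiodicPointlike_general h hn hn ((sgPow_add X hn hn).trans hid).ge
end
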